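/- For every Λ ≥ 2/√π there exist constants c(Λ) > 0 and C(Λ) > 0 with the following property. Let ρ ∈ L^∞(ℝ²) be nonnegative, compactly supported, with ‖ρ‖_{L¹} = ‖ρ‖_{L^∞} = 1; set D := diam(supp ρ*) and δ := E(ρ*) − E(ρ). If D ≤ Λ and δ ≤ c(Λ), then there exist a point x₀ ∈ ℝ² and a nonnegative function ρ̃ ∈ L^∞(ℝ²) such that ρ̃ is equimeasurable with ρ (i.e. |{ρ̃ > a}| = |{ρ > a}| for every a > 0), ρ̃ = ρ on B_{3D}(x₀), supp ρ̃ ⊆ B_{4D}(x₀), and E(ρ̃) ≥ E(ρ) − C(Λ) δ. -/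

import Mathlib

/-!
Write `I` for the interaction through the kernel `log r`, so that `E = -I / (2π)`, and let `ρs` be
the symmetric decreasing rearrangement of `ρ`, with support of diameter `D`. Up to the constant
`log D`, the kernel is `log⁺ (r / D) - log⁺ (D / r)`. By Riesz's rearrangement inequality the near
part `log⁺ (D / r)` has a larger interaction for `ρs` than for `ρ`, while the far part
`log⁺ (r / D)` does not see `ρs` at all. Hence the far interaction of `ρ` is at most
`I ρ - I ρs = 2πδ`, and averaging over the centre yields a ball of radius `3 D` that misses only a
mass `O(δ)` of `ρ`. This mass is moved into an annulus around the ball by a decreasing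
rearrangement; as the kernel has an integrable singularity, this costs only the mass moved times a
constant depending on the final diameter.

For continuous functions Riesz's inequality comes from polarization: two-point symmetrization
increases the interaction and decreases the second moment `∫ ‖x‖² f x`, strictly so unless it fixes
`f`. By Arzelà–Ascoli the second moment has a minimizer among the functions with the distribution
and the modulus of continuity of `f` and at least its interaction; this minimizer is fixed by all
polarizations, hence radially decreasing.
-/

open MeasureTheory Metric Filter
open scoped Real ENNReal RealInnerProductSpace

noncomputable section

abbrev E2 : Type := EuclideanSpace ℝ (Fin 2)

/-- The logarithmic interaction energy. -/
def energy (f : E2 → ℝ) : ℝ :=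
  -(2 * Real.pi)⁻¹ * ∫ p : E2 × E2, Real.log (dist p.1 p.2) * (f p.1 * f p.2)

/-- `g` is the symmetric decreasing rearrangement of `f`. -/
def IsSymmDecRearr (f g : E2 → ℝ) : Prop :=
  (∀ x, 0 ≤ g x) ∧
  ∀ a : ℝ, 0 < a →
    (∃ r : ℝ, Metric.ball (0 : E2) r ⊆ {x | a ≤ g x} ∧
        {x | a ≤ g x} ⊆ Metric.closedBall (0 : E2) r) ∧
    volume {x | a ≤ g x} = volume {x | a ≤ |f x|}

/-- The measure with density `f` with respect to Lebesgue measure. -/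
def densMeasure (f : E2 → ℝ) : Measure E2 :=
  volume.withDensity fun x => ENNReal.ofReal (f x)

/-- Squared 2-Wasserstein distance between two measures. -/
def W2sq (μ ν : Measure E2) : ℝ≥0∞ :=
  ⨅ γ ∈ {γ : Measure (E2 × E2) | γ.map Prod.fst = μ ∧ γ.map Prod.snd = ν},
    ∫⁻ p, ENNReal.ofReal (dist p.1 p.2 ^ 2) ∂γ

/-- Center of mass of a density. -/
def centerOfMass (f : E2 → ℝ) : E2 :=
  (∫ x, f x)⁻¹ • ∫ x, f x • x

section Reflection

variable {V : Type*} [NormedAddCommGroup V] [InnerProductSpace ℝ V]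

/-- Reflection across the affine hyperplane through `p` orthogonal to `p`; it is the identity for
`p = 0`. With this parametrization the origin lies on the side `{x | ⟪p, x - p⟫ ≤ 0}`. -/
def hyperplaneReflection (p : V) : V ≃ᵢ V :=
  (Submodule.reflection (ℝ ∙ p)ᗮ).toIsometryEquiv.trans (.addRight ((2 : ℝ) • p))

lemma hyperplaneReflection_apply (p x : V) :
    hyperplaneReflection p x = x - (2 * ⟪p, x - p⟫ / ‖p‖ ^ 2) • p := by
  have h : hyperplaneReflection p x = (Submodule.reflection (ℝ ∙ p)ᗮ) x + (2 : ℝ) • p := rfl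
  rw [h, Submodule.reflection_orthogonal_apply, Submodule.reflection_singleton_apply]
  rcases eq_or_ne p 0 with rfl | hp
  · simp
  · have : 2 * ⟪p, x - p⟫ / ‖p‖ ^ 2 = 2 * (⟪p, x⟫ / ‖p‖ ^ 2) - 2 := by
      rw [inner_sub_right, real_inner_self_eq_norm_sq]
      field_simp [norm_ne_zero_iff.2 hp]
    rw [this]
    simp only [RCLike.ofReal_real_eq_id, id]
    module

lemma inner_hyperplaneReflection_sub (p x : V) :
    ⟪p, hyperplaneReflection p x - p⟫ = -⟪p, x - p⟫ := by
  rcases eq_or_ne p 0 with rfl | hp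
  · simp
  · rw [hyperplaneReflection_apply, sub_right_comm, inner_sub_right, inner_smul_right,
      real_inner_self_eq_norm_sq, div_mul_cancel₀ _ (by simpa using hp)]
    ring

lemma hyperplaneReflection_hyperplaneReflection (p x : V) :
    hyperplaneReflection p (hyperplaneReflection p x) = x := by
  rw [hyperplaneReflection_apply, inner_hyperplaneReflection_sub, hyperplaneReflection_apply,
    mul_neg, neg_div]
  module

lemma hyperplaneReflection_eq_self {p x : V} (hx : ⟪p, x - p⟫ = 0) :
    hyperplaneReflection p x = x := by
  simp [hyperplaneReflection_apply, hx]

lemma dist_hyperplaneReflection_comm (p x y : V) :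
    dist (hyperplaneReflection p x) y = dist x (hyperplaneReflection p y) := by
  rw [← (hyperplaneReflection p).dist_eq, hyperplaneReflection_hyperplaneReflection]

lemma dist_hyperplaneReflection_sq (p x y : V) :
    dist x (hyperplaneReflection p y) ^ 2 =
      dist x y ^ 2 + 4 * (⟪p, x - p⟫ * ⟪p, y - p⟫) / ‖p‖ ^ 2 := by
  rcases eq_or_ne p 0 with rfl | hp
  · simp [hyperplaneReflection_apply]
  have hxy : ⟪x - y, p⟫ = ⟪p, x - p⟫ - ⟪p, y - p⟫ := by
    rw [← inner_sub_right, sub_sub_sub_cancel_right, real_inner_comm]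
  have h : x - hyperplaneReflection p y = (x - y) + (2 * ⟪p, y - p⟫ / ‖p‖ ^ 2) • p := by
    rw [hyperplaneReflection_apply]; abel
  rw [dist_eq_norm, dist_eq_norm, h, norm_add_sq_real, inner_smul_right, norm_smul, hxy, mul_pow,
    Real.norm_eq_abs, sq_abs]
  field_simp [norm_ne_zero_iff.2 hp]
  ring

lemma dist_le_dist_hyperplaneReflection {p x y : V} (h : 0 ≤ ⟪p, x - p⟫ * ⟪p, y - p⟫) :
    dist x y ≤ dist x (hyperplaneReflection p y) := by
  refine (sq_le_sq₀ dist_nonneg dist_nonneg).1 ?_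
  rw [dist_hyperplaneReflection_sq]
  exact le_add_of_nonneg_right (by positivity)

lemma dist_hyperplaneReflection_le_dist {p x y : V} (h : ⟪p, x - p⟫ * ⟪p, y - p⟫ ≤ 0) :
    dist x (hyperplaneReflection p y) ≤ dist x y := by
  refine (sq_le_sq₀ dist_nonneg dist_nonneg).1 ?_
  rw [dist_hyperplaneReflection_sq]
  exact add_le_of_nonpos_right (div_nonpos_of_nonpos_of_nonneg (by linarith) (by positivity))

lemma norm_hyperplaneReflection_sq (p x : V) :
    ‖hyperplaneReflection p x‖ ^ 2 = ‖x‖ ^ 2 - 4 * ⟪p, x - p⟫ := by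
  rcases eq_or_ne p 0 with rfl | hp
  · simp [hyperplaneReflection_apply]
  have h := dist_hyperplaneReflection_sq p 0 x
  rw [dist_zero_left, dist_zero_left, zero_sub, inner_neg_right, real_inner_self_eq_norm_sq] at h
  rw [h]
  field_simp [norm_ne_zero_iff.2 hp]
  ring

lemma norm_le_norm_hyperplaneReflection {p x : V} (hx : ⟪p, x - p⟫ ≤ 0) :
    ‖x‖ ≤ ‖hyperplaneReflection p x‖ := by
  refine (sq_le_sq₀ (norm_nonneg _) (norm_nonneg _)).1 ?_
  rw [norm_hyperplaneReflection_sq]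
  linarith

lemma exists_hyperplaneReflection_eq_of_norm_lt {x y : V} (h : ‖x‖ < ‖y‖) :
    ∃ p : V, ⟪p, x - p⟫ < 0 ∧ hyperplaneReflection p x = y := by
  have hne : y - x ≠ 0 := fun h0 => h.ne (by rw [sub_eq_zero.1 h0])
  have hn : 0 < ‖y - x‖ ^ 2 := by positivity
  have hlt : ‖x‖ ^ 2 < ‖y‖ ^ 2 := by gcongr
  obtain ⟨c, hc0, hcn⟩ : ∃ c : ℝ, 0 < c ∧ c * ‖y - x‖ ^ 2 = (‖y‖ ^ 2 - ‖x‖ ^ 2) / 2 :=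
    ⟨(‖y‖ ^ 2 - ‖x‖ ^ 2) / 2 / ‖y - x‖ ^ 2, div_pos (by linarith) hn, div_mul_cancel₀ _ hn.ne'⟩
  have hin : 2 * ⟪y - x, x⟫ = ‖y‖ ^ 2 - ‖x‖ ^ 2 - ‖y - x‖ ^ 2 := by
    rw [norm_sub_sq_real, inner_sub_left, real_inner_self_eq_norm_sq]; ring
  have hp : ⟪c • (y - x), x - c • (y - x)⟫ = -(c * ‖y - x‖ ^ 2 / 2) := by
    rw [inner_smul_left, inner_sub_right, inner_smul_right, real_inner_self_eq_norm_sq,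
      RCLike.conj_to_real]
    linear_combination (c / 2) * hin - c * hcn
  refine ⟨c • (y - x), by rw [hp]; nlinarith, ?_⟩
  have hq : 2 * -(c * ‖y - x‖ ^ 2 / 2) / ‖c • (y - x)‖ ^ 2 = -c⁻¹ := by
    rw [norm_smul, mul_pow, Real.norm_eq_abs, sq_abs]
    field_simp
  rw [hyperplaneReflection_apply, hp, hq, smul_smul, neg_mul, inv_mul_cancel₀ hc0.ne']
  module

end Reflection

section Polarization

variable {V : Type*} [NormedAddCommGroup V] [InnerProductSpace ℝ V] {p : V}

/-- Two-point symmetrization of `f` with respect to `hyperplaneReflection p`: of the two values at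
a pair of mirror points, the larger one goes to the side of the origin. -/
def polarize (p : V) (f : V → ℝ) (x : V) : ℝ :=
  if ⟪p, x - p⟫ ≤ 0 then max (f x) (f (hyperplaneReflection p x))
  else min (f x) (f (hyperplaneReflection p x))

lemma polarize_of_nonpos {f : V → ℝ} {x : V} (hx : ⟪p, x - p⟫ ≤ 0) :
    polarize p f x = max (f x) (f (hyperplaneReflection p x)) := if_pos hx

lemma polarize_of_nonneg {f : V → ℝ} {x : V} (hx : 0 ≤ ⟪p, x - p⟫) :
    polarize p f x = min (f x) (f (hyperplaneReflection p x)) := by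
  rcases hx.eq_or_lt with hx | hx
  · rw [polarize_of_nonpos hx.ge, hyperplaneReflection_eq_self hx.symm, max_self, min_self]
  · exact if_neg hx.not_ge

lemma polarize_hyperplaneReflection_of_nonpos {f : V → ℝ} {x : V} (hx : ⟪p, x - p⟫ ≤ 0) :
    polarize p f (hyperplaneReflection p x) = min (f x) (f (hyperplaneReflection p x)) := by
  rw [polarize_of_nonneg (by rw [inner_hyperplaneReflection_sub]; linarith),
    hyperplaneReflection_hyperplaneReflection, min_comm]

lemma polarize_hyperplaneReflection_of_nonneg {f : V → ℝ} {x : V} (hx : 0 ≤ ⟪p, x - p⟫) :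
    polarize p f (hyperplaneReflection p x) = max (f x) (f (hyperplaneReflection p x)) := by
  rw [polarize_of_nonpos (by rw [inner_hyperplaneReflection_sub]; linarith),
    hyperplaneReflection_hyperplaneReflection, max_comm]

lemma polarize_add_polarize_hyperplaneReflection (ψ : ℝ → ℝ) (f : V → ℝ) (x : V) :
    ψ (polarize p f x) + ψ (polarize p f (hyperplaneReflection p x)) =
      ψ (f x) + ψ (f (hyperplaneReflection p x)) := by
  rcases le_total ⟪p, x - p⟫ 0 with hx | hx
  · rw [polarize_of_nonpos hx, polarize_hyperplaneReflection_of_nonpos hx]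
    rcases le_total (f x) (f (hyperplaneReflection p x)) with h | h <;> simp [h, add_comm]
  · rw [polarize_of_nonneg hx, polarize_hyperplaneReflection_of_nonneg hx]
    rcases le_total (f x) (f (hyperplaneReflection p x)) with h | h <;> simp [h, add_comm]

lemma abs_polarize_sub_polarize_hyperplaneReflection (f : V → ℝ) (x : V) :
    |polarize p f x - polarize p f (hyperplaneReflection p x)| =
      |f x - f (hyperplaneReflection p x)| := by
  rcases le_total ⟪p, x - p⟫ 0 with hx | hx
  · rw [polarize_of_nonpos hx, polarize_hyperplaneReflection_of_nonpos hx, max_sub_min_eq_abs,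
      abs_abs, abs_sub_comm]
  · rw [polarize_of_nonneg hx, polarize_hyperplaneReflection_of_nonneg hx, abs_sub_comm,
      max_sub_min_eq_abs, abs_abs, abs_sub_comm]

lemma polarize_hyperplaneReflection_le_polarize {f : V → ℝ} {x : V} (hx : ⟪p, x - p⟫ ≤ 0) :
    polarize p f (hyperplaneReflection p x) ≤ polarize p f x := by
  rw [polarize_of_nonpos hx, polarize_hyperplaneReflection_of_nonpos hx]
  exact min_le_max

lemma polarize_le_polarize_hyperplaneReflection {f : V → ℝ} {x : V} (hx : 0 ≤ ⟪p, x - p⟫) :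
    polarize p f x ≤ polarize p f (hyperplaneReflection p x) := by
  rw [polarize_of_nonneg hx, polarize_hyperplaneReflection_of_nonneg hx]
  exact min_le_max

lemma sub_polarize_mul_inner_nonneg (f : V → ℝ) (x : V) :
    0 ≤ (f x - polarize p f x) * ⟪p, x - p⟫ := by
  rcases le_total ⟪p, x - p⟫ 0 with hx | hx
  · rw [polarize_of_nonpos hx]
    exact mul_nonneg_of_nonpos_of_nonpos (sub_nonpos.2 (le_max_left _ _)) hx
  · rw [polarize_of_nonneg hx]
    exact mul_nonneg (sub_nonneg.2 (min_le_left _ _)) hx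

lemma polarize_nonneg {f : V → ℝ} (hf : ∀ x, 0 ≤ f x) (x : V) : 0 ≤ polarize p f x := by
  unfold polarize
  split_ifs
  · exact (hf x).trans (le_max_left _ _)
  · exact le_min (hf _) (hf _)

lemma polarize_le {f : V → ℝ} {M : ℝ} (hf : ∀ x, f x ≤ M) (x : V) : polarize p f x ≤ M := by
  unfold polarize
  split_ifs
  · exact max_le (hf _) (hf _)
  · exact (min_le_left _ _).trans (hf _)

lemma polarize_eq_zero {f : V → ℝ} (hf0 : ∀ x, 0 ≤ f x) {R : ℝ} (hf : ∀ x, R < ‖x‖ → f x = 0)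
    {x : V} (hx : R < ‖x‖) : polarize p f x = 0 := by
  rcases le_total ⟪p, x - p⟫ 0 with h | h
  · rw [polarize_of_nonpos h, hf x hx, hf _ (hx.trans_le (norm_le_norm_hyperplaneReflection h)),
      max_self]
  · rw [polarize_of_nonneg h, hf x hx, min_eq_left (hf0 _)]

lemma polarize_sub_polarize_le {f : V → ℝ} {r A : ℝ} (hf : ∀ x y, dist x y ≤ r → f x - f y ≤ A)
    {x y : V} (hxy : dist x y ≤ r) : polarize p f x - polarize p f y ≤ A := by
  have hxy₁ := hf x y hxy
  have hxy₂ := hf (hyperplaneReflection p x) (hyperplaneReflection p y)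
    (by rwa [(hyperplaneReflection p).dist_eq])
  rcases le_total ⟪p, x - p⟫ 0 with hx | hx <;> rcases le_total ⟪p, y - p⟫ 0 with hy | hy
  · rw [polarize_of_nonpos hx, polarize_of_nonpos hy]
    grind
  · have hd := (dist_hyperplaneReflection_le_dist
      (mul_nonpos_of_nonpos_of_nonneg hx hy)).trans hxy
    have hxy₃ := hf _ _ hd
    have hxy₄ := hf _ _ ((dist_hyperplaneReflection_comm p x y).trans_le hd)
    rw [polarize_of_nonpos hx, polarize_of_nonneg hy]
    grind
  · rw [polarize_of_nonneg hx, polarize_of_nonpos hy]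
    grind
  · rw [polarize_of_nonneg hx, polarize_of_nonneg hy]
    grind

lemma mul_polarize_sub_mul_polarize_sub_nonneg {φ : ℝ → ℝ} (hφ : Antitone φ) (f : V → ℝ)
    (x y : V) :
    0 ≤ (φ (dist x y) - φ (dist x (hyperplaneReflection p y))) *
      ((polarize p f x - polarize p f (hyperplaneReflection p x)) *
        (polarize p f y - polarize p f (hyperplaneReflection p y))) := by
  have hpos (h : 0 ≤ ⟪p, x - p⟫ * ⟪p, y - p⟫) :
      0 ≤ φ (dist x y) - φ (dist x (hyperplaneReflection p y)) :=
    sub_nonneg.2 (hφ (dist_le_dist_hyperplaneReflection h))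
  have hneg (h : ⟪p, x - p⟫ * ⟪p, y - p⟫ ≤ 0) :
      φ (dist x y) - φ (dist x (hyperplaneReflection p y)) ≤ 0 :=
    sub_nonpos.2 (hφ (dist_hyperplaneReflection_le_dist h))
  have near {z : V} (hz : ⟪p, z - p⟫ ≤ 0) :=
    sub_nonneg.2 (polarize_hyperplaneReflection_le_polarize (f := f) hz)
  have far {z : V} (hz : 0 ≤ ⟪p, z - p⟫) :=
    sub_nonpos.2 (polarize_le_polarize_hyperplaneReflection (f := f) hz)
  rcases le_total ⟪p, x - p⟫ 0 with hx | hx <;> rcases le_total ⟪p, y - p⟫ 0 with hy | hy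
  · exact mul_nonneg (hpos (mul_nonneg_of_nonpos_of_nonpos hx hy)) (mul_nonneg (near hx) (near hy))
  · exact mul_nonneg_of_nonpos_of_nonpos (hneg (mul_nonpos_of_nonpos_of_nonneg hx hy))
      (mul_nonpos_of_nonneg_of_nonpos (near hx) (far hy))
  · exact mul_nonneg_of_nonpos_of_nonpos (hneg (mul_nonpos_of_nonneg_of_nonpos hx hy))
      (mul_nonpos_of_nonpos_of_nonneg (far hx) (near hy))
  · exact mul_nonneg (hpos (mul_nonneg hx hy)) (mul_nonneg_of_nonpos_of_nonpos (far hx) (far hy))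

/-- Twice the form is `(a + b) (u + u') (v + v') + (a - b) (u - u') (v - v')`, where polarization
keeps the sums `u + u'` and `v + v'`, keeps the absolute values of the differences, and makes the
last product nonnegative. -/
lemma four_point_le_polarize {φ : ℝ → ℝ} (hφ : Antitone φ) (f : V → ℝ) (x y : V) :
    φ (dist x y) * (f x * f y + f (hyperplaneReflection p x) * f (hyperplaneReflection p y)) +
        φ (dist x (hyperplaneReflection p y)) *
          (f x * f (hyperplaneReflection p y) + f (hyperplaneReflection p x) * f y) ≤
      φ (dist x y) * (polarize p f x * polarize p f y +
          polarize p f (hyperplaneReflection p x) * polarize p f (hyperplaneReflection p y)) +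
        φ (dist x (hyperplaneReflection p y)) *
          (polarize p f x * polarize p f (hyperplaneReflection p y) +
            polarize p f (hyperplaneReflection p x) * polarize p f y) := by
  have hdiff := (le_abs_self ((φ (dist x y) - φ (dist x (hyperplaneReflection p y))) *
    ((f x - f (hyperplaneReflection p x)) * (f y - f (hyperplaneReflection p y))))).trans_eq <| by
      rw [abs_mul, abs_mul, ← abs_polarize_sub_polarize_hyperplaneReflection f x,
        ← abs_polarize_sub_polarize_hyperplaneReflection f y, ← abs_mul, ← abs_mul,
        abs_of_nonneg (mul_polarize_sub_mul_polarize_sub_nonneg hφ f x y)]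
  have hx := polarize_add_polarize_hyperplaneReflection (p := p) id f x
  have hy := polarize_add_polarize_hyperplaneReflection (p := p) id f y
  have hsum := congrArg₂ (fun s t =>
    (φ (dist x y) + φ (dist x (hyperplaneReflection p y))) * (s * t)) hx hy
  simp only [id] at hsum
  linarith

end Polarization

lemma two_mul_integral_eq_integral_add_comp {α : Type*} [MeasurableSpace α] {μ : Measure α}
    {T : α → α} (hT : MeasurePreserving T μ μ) (hTe : MeasurableEmbedding T) {F : α → ℝ}
    (hF : Integrable F μ) : 2 * ∫ x, F x ∂μ = ∫ x, (F x + F (T x)) ∂μ := by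
  have h := integral_add hF (hT.integrable_comp_of_integrable hF)
  simp only [Function.comp_apply] at h
  rw [h, hT.integral_comp hTe, two_mul]

section PolarizationIntegral

variable {V : Type*} [NormedAddCommGroup V] [InnerProductSpace ℝ V] [MeasurableSpace V]
  [BorelSpace V]

lemma measurableEmbedding_hyperplaneReflection (p : V) :
    MeasurableEmbedding (hyperplaneReflection p) :=
  (hyperplaneReflection p).toHomeomorph.measurableEmbedding

variable [FiniteDimensional ℝ V] {p : V} {f : V → ℝ}

/-- The interaction of `f` with itself through the radial kernel `φ`. -/
def interaction (φ : ℝ → ℝ) (f : V → ℝ) : ℝ :=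
  ∫ q : V × V, φ (dist q.1 q.2) * (f q.1 * f q.2)

lemma integrable_interaction {φ : ℝ → ℝ} (hφ : Measurable φ) {N : ℝ} (hN : ∀ r, |φ r| ≤ N)
    {f g : V → ℝ} (hf : Integrable f) (hg : Integrable g) :
    Integrable fun q : V × V => φ (dist q.1 q.2) * (f q.1 * g q.2) :=
  (hf.mul_prod hg).bdd_mul (hφ.comp (by fun_prop)).aestronglyMeasurable
    (ae_of_all _ fun _ => hN _)

lemma measurePreserving_hyperplaneReflection (p : V) :
    MeasurePreserving (hyperplaneReflection p) (volume : Measure V) volume :=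
  (measurePreserving_add_right volume ((2 : ℝ) • p)).comp
    (Submodule.reflection (ℝ ∙ p)ᗮ).measurePreserving

lemma integrable_polarize (hf : Integrable f) : Integrable (polarize p f) := by
  have hσ := (measurePreserving_hyperplaneReflection p).integrable_comp_of_integrable hf
  exact Integrable.piecewise (s := {x | ⟪p, x - p⟫ ≤ 0})
    (measurableSet_le (by fun_prop) measurable_const)
    (hf.sup hσ).integrableOn (hf.inf hσ).integrableOn

lemma integral_comp_polarize (ψ : ℝ → ℝ) (hf : Integrable fun x => ψ (f x))
    (hp : Integrable fun x => ψ (polarize p f x)) :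
    ∫ x, ψ (polarize p f x) = ∫ x, ψ (f x) := by
  have hσ := measurePreserving_hyperplaneReflection p
  have hσe := measurableEmbedding_hyperplaneReflection p
  have h := two_mul_integral_eq_integral_add_comp hσ hσe hp
  simp only [polarize_add_polarize_hyperplaneReflection] at h
  rw [← two_mul_integral_eq_integral_add_comp hσ hσe hf] at h
  exact mul_left_cancel₀ two_ne_zero h

lemma interaction_le_polarize {φ : ℝ → ℝ} (hφ : Antitone φ) {N : ℝ} (hN : ∀ r, |φ r| ≤ N)
    (hf : Integrable f) : interaction φ f ≤ interaction φ (polarize p f) := by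
  have hσ := measurePreserving_hyperplaneReflection p
  have hσe := measurableEmbedding_hyperplaneReflection p
  have hid := MeasurePreserving.id (volume : Measure V)
  have hIf := integrable_interaction hφ.measurable hN hf hf
  have hIp := integrable_interaction hφ.measurable hN (integrable_polarize (p := p) hf)
    (integrable_polarize (p := p) hf)
  have hF := hIp.sub hIf
  have hG := hF.add ((hσ.prod hid).integrable_comp_of_integrable hF)
  have h₁ := two_mul_integral_eq_integral_add_comp (hσ.prod hid) (hσe.prodMap .id) hF
  have h₂ := two_mul_integral_eq_integral_add_comp (hid.prod hσ)
    (MeasurableEmbedding.id.prodMap hσe) hG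
  refine sub_nonneg.1 ?_
  rw [interaction, interaction, ← integral_sub hIp hIf]
  suffices h : 0 ≤ 2 * (2 * ∫ q : V × V, (φ (dist q.1 q.2) * (polarize p f q.1 * polarize p f q.2)
      - φ (dist q.1 q.2) * (f q.1 * f q.2))) by linarith
  refine (integral_nonneg fun q => ?_).trans_eq (h₂.symm.trans (congrArg (2 * ·) h₁.symm))
  have h := four_point_le_polarize (p := p) hφ f q.1 q.2
  simp only [Pi.zero_apply, Pi.add_apply, Pi.sub_apply, Function.comp_apply, Prod.map_fst,
    Prod.map_snd, id, (hyperplaneReflection p).dist_eq, dist_hyperplaneReflection_comm]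
  linarith

lemma two_mul_second_moment_sub_polarize (hf : Integrable fun x => f x * ‖x‖ ^ 2)
    (hp : Integrable fun x => polarize p f x * ‖x‖ ^ 2) :
    2 * ((∫ x, f x * ‖x‖ ^ 2) - ∫ x, polarize p f x * ‖x‖ ^ 2) =
      ∫ x, 4 * ((f x - polarize p f x) * ⟪p, x - p⟫) := by
  rw [← integral_sub hf hp]
  refine (two_mul_integral_eq_integral_add_comp (measurePreserving_hyperplaneReflection p)
    (measurableEmbedding_hyperplaneReflection p) (hf.sub hp)).trans
    (integral_congr_ae (ae_of_all _ fun x => ?_))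
  have h := polarize_add_polarize_hyperplaneReflection (p := p) id f x
  simp only [id] at h
  simp only [Pi.sub_apply, norm_hyperplaneReflection_sq]
  linear_combination (4 * ⟪p, x - p⟫ - ‖x‖ ^ 2) * h

end PolarizationIntegral

section PolarizationContinuous

variable {V : Type*} [NormedAddCommGroup V] [InnerProductSpace ℝ V] {p : V} {f : V → ℝ}

lemma continuous_polarize (hf : Continuous f) : Continuous (polarize p f) := by
  have hσ := hf.comp (hyperplaneReflection p).continuous
  refine Continuous.if_le (hf.max hσ) (hf.min hσ) (by fun_prop) continuous_const fun x hx => ?_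
  rw [hyperplaneReflection_eq_self hx, max_self, min_self]

lemma hasCompactSupport_polarize (hf : HasCompactSupport f) :
    HasCompactSupport (polarize p f) := by
  have hσ : IsCompact (hyperplaneReflection p ⁻¹' tsupport f) :=
    (hyperplaneReflection p).toHomeomorph.isCompact_preimage.2 hf.isCompact
  refine HasCompactSupport.intro (hf.isCompact.union hσ) fun x hx => ?_
  rw [Set.mem_union, not_or] at hx
  rw [polarize, image_eq_zero_of_notMem_tsupport hx.1, image_eq_zero_of_notMem_tsupport hx.2,
    max_self, min_self, ite_self]

lemma le_of_norm_lt_of_forall_polarize_eq (h : ∀ p, polarize p f = f) {x y : V}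
    (hxy : ‖x‖ < ‖y‖) : f y ≤ f x := by
  obtain ⟨p, hx, rfl⟩ := exists_hyperplaneReflection_eq_of_norm_lt hxy
  rw [← h p]
  exact polarize_hyperplaneReflection_le_polarize hx.le

variable [FiniteDimensional ℝ V] [MeasurableSpace V] [BorelSpace V]

lemma polarize_eq_self_of_second_moment_le (hf : Continuous f) (hfc : HasCompactSupport f)
    (h : ∫ x, f x * ‖x‖ ^ 2 ≤ ∫ x, polarize p f x * ‖x‖ ^ 2) : polarize p f = f := by
  have hp := continuous_polarize (p := p) hf
  have hpc := hasCompactSupport_polarize (p := p) hfc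
  have integrable_moment {g : V → ℝ} (hg : Continuous g) (hgc : HasCompactSupport g) :
      Integrable fun x => g x * ‖x‖ ^ 2 :=
    (hg.mul (continuous_norm.pow 2)).integrable_of_hasCompactSupport hgc.mul_right
  have hmom := two_mul_second_moment_sub_polarize (integrable_moment hf hfc)
    (integrable_moment hp hpc)
  rw [integral_const_mul] at hmom
  have hnn := sub_polarize_mul_inner_nonneg (p := p) f
  have hc : Continuous fun x => (f x - polarize p f x) * ⟪p, x - p⟫ :=
    (hf.sub hp).mul (by fun_prop)
  have hzero : ∫ x, (f x - polarize p f x) * ⟪p, x - p⟫ = 0 :=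
    le_antisymm (by linarith) (integral_nonneg hnn)
  have hz : (fun x => (f x - polarize p f x) * ⟪p, x - p⟫) = 0 :=
    (hc.ae_eq_iff_eq volume continuous_zero).1 <| (integral_eq_zero_iff_of_nonneg hnn
      (hc.integrable_of_hasCompactSupport (hfc.sub hpc).mul_right)).1 hzero
  funext x
  rcases mul_eq_zero.1 (congrFun hz x) with hx | hx
  · exact (sub_eq_zero.1 hx).symm
  · rw [polarize_of_nonpos hx.le, hyperplaneReflection_eq_self hx, max_self]

end PolarizationContinuous

section ModulusClass

variable {V : Type*} [NormedAddCommGroup V] {f : V → ℝ} {M R : ℝ}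

/-- The function `h` has values in `[0, M]`, vanishes outside the ball of radius `R`, and has a
modulus of continuity no worse than that of `f`. -/
structure InModulusClass (f : V → ℝ) (M R : ℝ) (h : V → ℝ) : Prop where
  nonneg : ∀ x, 0 ≤ h x
  le : ∀ x, h x ≤ M
  eq_zero : ∀ x, R < ‖x‖ → h x = 0
  sub_le : ∀ r A, (∀ x y, dist x y ≤ r → f x - f y ≤ A) → ∀ x y, dist x y ≤ r → h x - h y ≤ A

lemma isCompact_inModulusClass (f : V → ℝ) (M R : ℝ) :
    IsCompact {h | InModulusClass f M R h} := by
  refine (isCompact_univ_pi fun _ : V => isCompact_Icc (a := (0 : ℝ)) (b := M)).of_isClosed_subset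
    ?_ fun h hh x _ => ⟨hh.nonneg x, hh.le x⟩
  have hset : {h | InModulusClass f M R h} = {h | (∀ x, 0 ≤ h x) ∧ (∀ x, h x ≤ M) ∧
      (∀ x, R < ‖x‖ → h x = 0) ∧ ∀ r A, (∀ x y, dist x y ≤ r → f x - f y ≤ A) →
        ∀ x y, dist x y ≤ r → h x - h y ≤ A} :=
    Set.ext fun h => ⟨fun ⟨h₀, hM, hR, hA⟩ => ⟨h₀, hM, hR, hA⟩,
      fun ⟨h₀, hM, hR, hA⟩ => ⟨h₀, hM, hR, hA⟩⟩
  simp only [hset, Set.ofPred_and, Set.ofPred_forall]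
  refine .inter ?_ (.inter ?_ (.inter ?_ ?_))
  · exact isClosed_iInter fun x => isClosed_le continuous_const (continuous_apply x)
  · exact isClosed_iInter fun x => isClosed_le (continuous_apply x) continuous_const
  · exact isClosed_iInter fun x => isClosed_iInter fun _ =>
      isClosed_eq (continuous_apply x) continuous_const
  · exact isClosed_iInter fun r => isClosed_iInter fun A => isClosed_iInter fun _ =>
      isClosed_iInter fun x => isClosed_iInter fun y => isClosed_iInter fun _ =>
      isClosed_le ((continuous_apply x).sub (continuous_apply y)) continuous_const

lemma exists_forall_inModulusClass_dist_lt (hf : UniformContinuous f) (M R : ℝ) {ε : ℝ}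
    (hε : 0 < ε) :
    ∃ δ > 0, ∀ h, InModulusClass f M R h → ∀ x y, dist x y ≤ δ → dist (h x) (h y) < ε := by
  obtain ⟨δ, hδ, H⟩ := Metric.uniformContinuous_iff.1 hf (ε / 2) (half_pos hε)
  refine ⟨δ / 2, half_pos hδ, fun h hh x y hxy => ?_⟩
  have hmod := hh.sub_le (δ / 2) (ε / 2) fun u v huv =>
    (le_abs_self _).trans (H (huv.trans_lt (half_lt_self hδ))).le
  have hx := hmod x y hxy
  have hy := hmod y x (by rwa [dist_comm])
  rw [Real.dist_eq, abs_lt]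
  constructor <;> linarith

lemma InModulusClass.continuous {h : V → ℝ} (hh : InModulusClass f M R h)
    (hf : UniformContinuous f) : Continuous h := by
  refine Metric.continuous_iff.2 fun x ε hε => ?_
  obtain ⟨δ, hδ, H⟩ := exists_forall_inModulusClass_dist_lt hf M R hε
  exact ⟨δ, hδ, fun y hy => H h hh y x hy.le⟩

lemma InModulusClass.abs_le {h : V → ℝ} (hh : InModulusClass f M R h) (x : V) :
    |h x| ≤ (closedBall (0 : V) R).indicator (fun _ => M) x := by
  rw [abs_of_nonneg (hh.nonneg x)]
  refine Set.le_indicator (fun x _ => hh.le x) (fun x hx => ?_) x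
  exact (hh.eq_zero x (by simpa using hx)).le

lemma isCompact_continuousMap_inModulusClass (hf : UniformContinuous f) (M R : ℝ) :
    IsCompact {h : C(V, ℝ) | InModulusClass f M R h} := by
  refine ArzelaAscoli.isCompact_of_equicontinuous _ ?_ fun x => ?_
  · convert isCompact_inModulusClass f M R
    ext h
    constructor
    · rintro ⟨g, hg, rfl⟩
      exact hg
    · exact fun hh => ⟨⟨h, hh.continuous hf⟩, hh, rfl⟩
  · refine Metric.equicontinuousAt_iff.2 fun ε hε => ?_
    obtain ⟨δ, hδ, H⟩ := exists_forall_inModulusClass_dist_lt hf M R hε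
    exact ⟨δ, hδ, fun y hy h => H h.1 h.2 x y (by rw [dist_comm]; exact hy.le)⟩

lemma InModulusClass.hasCompactSupport [ProperSpace V] {h : V → ℝ}
    (hh : InModulusClass f M R h) : HasCompactSupport h :=
  HasCompactSupport.intro (isCompact_closedBall (0 : V) R) fun x hx =>
    hh.eq_zero x (by simpa using hx)

lemma exists_inModulusClass (hf : Continuous f) (hfc : HasCompactSupport f)
    (hf0 : ∀ x, 0 ≤ f x) : ∃ M R, InModulusClass f M R f := by
  obtain ⟨M, hM⟩ := hfc.exists_bound_of_continuous hf
  obtain ⟨R, hR⟩ := hfc.isCompact.isBounded.subset_closedBall (0 : V)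
  refine ⟨M, R, hf0, fun x => (le_abs_self _).trans (hM x), fun x hx => ?_, fun _ _ h => h⟩
  exact image_eq_zero_of_notMem_tsupport fun h => hx.not_ge (by simpa using hR h)

end ModulusClass

section RadialRearrangement

variable {V : Type*} [NormedAddCommGroup V] [InnerProductSpace ℝ V] {f : V → ℝ} {M R : ℝ}

lemma InModulusClass.polarize {h : V → ℝ} (hh : InModulusClass f M R h) (p : V) :
    InModulusClass f M R (polarize p h) where
  nonneg := polarize_nonneg hh.nonneg
  le := polarize_le hh.le
  eq_zero _ := polarize_eq_zero hh.nonneg hh.eq_zero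
  sub_le r A hf _ _ := polarize_sub_polarize_le (hh.sub_le r A hf)

variable [FiniteDimensional ℝ V] [MeasurableSpace V] [BorelSpace V]

lemma InModulusClass.integrable {h : V → ℝ} (hh : InModulusClass f M R h)
    (hf : UniformContinuous f) : Integrable h :=
  (hh.continuous hf).integrable_of_hasCompactSupport hh.hasCompactSupport

lemma integrable_indicator_closedBall_const (R A : ℝ) :
    Integrable ((closedBall (0 : V) R).indicator fun _ => A) :=
  (integrable_indicator_iff measurableSet_closedBall).2
    (integrableOn_const measure_closedBall_lt_top.ne)

lemma continuousOn_integral_comp_mul (hf : UniformContinuous f) {ψ : ℝ → ℝ} (hψ : Continuous ψ)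
    (hψ0 : ψ 0 = 0) {w : V → ℝ} (hw : Continuous w) :
    ContinuousOn (fun h : C(V, ℝ) => ∫ x, ψ (h x) * w x)
      {h : C(V, ℝ) | InModulusClass f M R h} := by
  obtain ⟨A, hA⟩ := (isCompact_Icc (a := (0 : ℝ)) (b := M)).exists_bound_of_continuousOn
    hψ.continuousOn
  obtain ⟨B, hB⟩ := (isCompact_closedBall (0 : V) R).exists_bound_of_continuousOn hw.continuousOn
  refine continuousOn_of_dominated (fun h hh => ?_) (fun h hh => ae_of_all _ fun x => ?_)
    (integrable_indicator_closedBall_const R (A * B))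
    (ae_of_all _ fun x => ((hψ.comp (continuous_eval_const x)).mul continuous_const).continuousOn)
  · exact ((hψ.comp (hh.continuous hf)).mul hw).aestronglyMeasurable
  · rw [norm_mul]
    by_cases hx : x ∈ closedBall (0 : V) R
    · rw [Set.indicator_of_mem hx]
      have hA' := hA (h x) ⟨hh.nonneg x, hh.le x⟩
      exact mul_le_mul hA' (hB x hx) (norm_nonneg _) ((norm_nonneg _).trans hA')
    · rw [Set.indicator_of_notMem hx, hh.eq_zero x (by simpa using hx), hψ0, norm_zero, zero_mul]

lemma continuousOn_interaction {φ : ℝ → ℝ} (hφ : Antitone φ) {N : ℝ} (hN : ∀ r, |φ r| ≤ N)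
    (hf : UniformContinuous f) :
    ContinuousOn (fun h : C(V, ℝ) => interaction φ h)
      {h : C(V, ℝ) | InModulusClass f M R h} := by
  have hb := integrable_indicator_closedBall_const (V := V) R M
  refine continuousOn_of_dominated (fun h hh => ?_) (fun h hh => ae_of_all _ fun q => ?_)
    ((hb.mul_prod hb).const_mul N) (ae_of_all _ fun q => ?_)
  · exact (integrable_interaction hφ.measurable hN (hh.integrable hf)
      (hh.integrable hf)).aestronglyMeasurable
  · rw [norm_mul, norm_mul]
    exact mul_le_mul (hN _) (mul_le_mul (hh.abs_le _) (hh.abs_le _) (norm_nonneg _)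
      ((abs_nonneg _).trans (hh.abs_le _))) (by positivity) ((abs_nonneg _).trans (hN 0))
  · exact (continuous_const.mul
      ((continuous_eval_const q.1).mul (continuous_eval_const q.2))).continuousOn

/-- Equality of the distributions of `f` and `h` away from the value `0`, tested against
continuous functions. -/
def Equidistributed (f h : V → ℝ) : Prop :=
  ∀ ψ : ℝ → ℝ, Continuous ψ → ψ 0 = 0 → ∫ x, ψ (h x) = ∫ x, ψ (f x)

/-- The competitors of the variational problem solved by the radial rearrangement of `f`. -/
def rearrCandidates (φ : ℝ → ℝ) (f : V → ℝ) (M R : ℝ) : Set C(V, ℝ) :=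
  {h | InModulusClass f M R h ∧ Equidistributed f h ∧ interaction φ f ≤ interaction φ h}

lemma isCompact_rearrCandidates {φ : ℝ → ℝ} (hφ : Antitone φ) {N : ℝ} (hN : ∀ r, |φ r| ≤ N)
    (hf : UniformContinuous f) (M R : ℝ) : IsCompact (rearrCandidates φ f M R) := by
  have hK := isCompact_continuousMap_inModulusClass hf M R
  have hI := (continuousOn_interaction (M := M) (R := R) hφ hN hf).preimage_isClosed_of_isClosed
    hK.isClosed (isClosed_Ici (a := interaction φ f))
  have hψ (ψ : ℝ → ℝ) (hψ : Continuous ψ) (hψ0 : ψ 0 = 0) :=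
    (continuousOn_integral_comp_mul (M := M) (R := R) hf hψ hψ0 continuous_const
      (w := fun _ => 1)).preimage_isClosed_of_isClosed hK.isClosed
      (isClosed_singleton (x := ∫ x, ψ (f x)))
  refine hK.of_isClosed_subset ?_ fun h hh => hh.1
  convert hI.inter (isClosed_iInter fun ψ => isClosed_iInter fun h => isClosed_iInter (hψ ψ h))
  ext h
  simp only [rearrCandidates, Equidistributed, Set.mem_inter_iff, Set.mem_iInter, Set.mem_preimage,
    Set.mem_Ici, Set.mem_singleton_iff, Set.mem_ofPred_eq, mul_one]
  grind

lemma polarize_mem_rearrCandidates {φ : ℝ → ℝ} (hφ : Antitone φ) {N : ℝ} (hN : ∀ r, |φ r| ≤ N)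
    (hf : UniformContinuous f) {h : C(V, ℝ)} (hh : h ∈ rearrCandidates φ f M R) (p : V) :
    ⟨polarize p h, continuous_polarize h.continuous⟩ ∈ rearrCandidates φ f M R := by
  obtain ⟨hM, hψ, hI⟩ := hh
  refine ⟨hM.polarize p, fun ψ hc h0 => ?_,
    hI.trans (interaction_le_polarize hφ hN (hM.integrable hf))⟩
  refine (integral_comp_polarize ψ ?_ ?_).trans (hψ ψ hc h0)
  · exact (hc.comp h.continuous).integrable_of_hasCompactSupport (hM.hasCompactSupport.comp_left h0)
  · exact (hc.comp (continuous_polarize h.continuous)).integrable_of_hasCompactSupport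
      ((hM.polarize p).hasCompactSupport.comp_left h0)

/-- The minimizer of the second moment among the candidates is fixed by all polarizations. -/
theorem exists_radial_rearrangement {φ : ℝ → ℝ} (hφ : Antitone φ) {N : ℝ} (hN : ∀ r, |φ r| ≤ N)
    (hf : Continuous f) (hfc : HasCompactSupport f) (hf0 : ∀ x, 0 ≤ f x) :
    ∃ h : V → ℝ, Continuous h ∧ HasCompactSupport h ∧ (∀ x, 0 ≤ h x) ∧
      (∀ x y, ‖x‖ < ‖y‖ → h y ≤ h x) ∧ Equidistributed f h ∧
      interaction φ f ≤ interaction φ h := by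
  have hfu := hfc.uniformContinuous_of_continuous hf
  obtain ⟨M, R, hfM⟩ := exists_inModulusClass hf hfc hf0
  have hne : (rearrCandidates φ f M R).Nonempty := ⟨⟨f, hf⟩, hfM, fun _ _ _ => rfl, le_rfl⟩
  obtain ⟨h, hh, hmin⟩ := (isCompact_rearrCandidates hφ hN hfu M R).exists_isMinOn hne <|
    (continuousOn_integral_comp_mul hfu continuous_id rfl (continuous_norm.pow 2)).mono
      fun _ hh => hh.1
  have hfix (p : V) : polarize p h = h :=
    polarize_eq_self_of_second_moment_le h.continuous hh.1.hasCompactSupport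
      (hmin (polarize_mem_rearrCandidates hφ hN hfu hh p))
  exact ⟨h, h.continuous, hh.1.hasCompactSupport, hh.1.nonneg,
    fun _ _ => le_of_norm_lt_of_forall_polarize_eq hfix, hh.2.1, hh.2.2⟩

end RadialRearrangement

section LayerCake

variable {α β : Type*} [MeasurableSpace α] [MeasurableSpace β] {μ : Measure α} {ν : Measure β}
  {f : α → ℝ} {g : β → ℝ}

lemma measure_lt_eq_iSup (μ : Measure α) (f : α → ℝ) (a : ℝ) :
    μ {x | a < f x} = ⨆ n : ℕ, μ {x | a + 1 / ((n : ℝ) + 1) ≤ f x} := by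
  have hmono : Monotone fun n : ℕ => {x | a + 1 / ((n : ℝ) + 1) ≤ f x} := fun m n hmn x hx =>
    le_trans (by gcongr) (Set.mem_ofPred_eq ▸ hx)
  rw [← hmono.measure_iUnion]
  congr 1
  ext x
  rw [Set.mem_iUnion]
  constructor
  · intro hx
    obtain ⟨n, hn⟩ := exists_nat_one_div_lt (sub_pos.2 (Set.mem_ofPred.1 hx))
    exact ⟨n, (lt_sub_iff_add_lt'.1 hn).le⟩
  · rintro ⟨n, hn⟩
    exact (lt_add_of_pos_right a Nat.one_div_pos_of_nat).trans_le hn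

lemma measure_lt_eq_of_measure_le_eq (h : ∀ a, 0 < a → ν {x | a ≤ g x} = μ {x | a ≤ f x}) {a : ℝ}
    (ha : 0 ≤ a) : ν {x | a < g x} = μ {x | a < f x} := by
  rw [measure_lt_eq_iSup, measure_lt_eq_iSup]
  exact iSup_congr fun n => h _ (by positivity)

lemma exists_gt_of_lt_measure_lt {a : ℝ} {s : ℝ≥0∞} (h : s < μ {x | a < f x}) :
    ∃ b, a < b ∧ s < μ {x | b < f x} := by
  rw [measure_lt_eq_iSup, lt_iSup_iff] at h
  obtain ⟨n, hn⟩ := h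
  have hpos : (0 : ℝ) < 1 / ((n : ℝ) + 1) := Nat.one_div_pos_of_nat
  obtain ⟨b, hab, hb⟩ := exists_between (lt_add_of_pos_right a hpos)
  exact ⟨b, hab, hn.trans_le (measure_mono fun x hx => hb.trans_le hx)⟩

lemma lintegral_ofReal_eq_of_measure_lt_eq (hf : AEMeasurable f μ) (hg : AEMeasurable g ν)
    (hf0 : ∀ x, 0 ≤ f x) (hg0 : ∀ x, 0 ≤ g x)
    (h : ∀ a, 0 < a → ν {x | a < g x} = μ {x | a < f x}) :
    ∫⁻ x, ENNReal.ofReal (g x) ∂ν = ∫⁻ x, ENNReal.ofReal (f x) ∂μ := by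
  rw [lintegral_eq_lintegral_meas_lt _ (ae_of_all _ hf0) hf,
    lintegral_eq_lintegral_meas_lt _ (ae_of_all _ hg0) hg]
  exact setLIntegral_congr_fun measurableSet_Ioi h

lemma integrable_of_measure_lt_eq (hf : Integrable f μ) (hg : AEMeasurable g ν)
    (hf0 : ∀ x, 0 ≤ f x) (hg0 : ∀ x, 0 ≤ g x)
    (h : ∀ a, 0 < a → ν {x | a < g x} = μ {x | a < f x}) : Integrable g ν := by
  refine ⟨hg.aestronglyMeasurable, (hasFiniteIntegral_iff_ofReal (ae_of_all _ hg0)).2 ?_⟩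
  rw [lintegral_ofReal_eq_of_measure_lt_eq hf.aemeasurable hg hf0 hg0 h]
  exact (hasFiniteIntegral_iff_ofReal (ae_of_all _ hf0)).1 hf.2

lemma integral_eq_of_measure_lt_eq (hf : AEMeasurable f μ) (hg : AEMeasurable g ν)
    (hf0 : ∀ x, 0 ≤ f x) (hg0 : ∀ x, 0 ≤ g x)
    (h : ∀ a, 0 < a → ν {x | a < g x} = μ {x | a < f x}) :
    ∫ x, g x ∂ν = ∫ x, f x ∂μ := by
  rw [integral_eq_lintegral_of_nonneg_ae (ae_of_all _ hg0) hg.aestronglyMeasurable,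
    integral_eq_lintegral_of_nonneg_ae (ae_of_all _ hf0) hf.aestronglyMeasurable,
    lintegral_ofReal_eq_of_measure_lt_eq hf hg hf0 hg0 h]

lemma map_restrict_Ici_apply {K : Set α} (hf : Measurable f) (hfK : ∀ x ∉ K, f x = 0) {a : ℝ}
    (ha : 0 < a) : (μ.restrict K).map f (Set.Ici a) = μ {x | a ≤ f x} := by
  rw [Measure.map_apply hf measurableSet_Ici, Measure.restrict_apply (hf measurableSet_Ici),
    Set.inter_eq_left.2]
  · rfl
  · intro x hx
    by_contra hxK
    exact ha.not_ge ((hfK x hxK).symm ▸ hx)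

lemma integral_map_restrict {K : Set α} (hK : μ K ≠ ∞) (hf : Measurable f)
    (hfK : ∀ x ∉ K, f x = 0) (ψ : BoundedContinuousFunction ℝ ℝ) :
    ∫ y, ψ y ∂((μ.restrict K).map f) = (∫ x, (ψ (f x) - ψ 0) ∂μ) + μ.real K * ψ 0 := by
  have : Fact (μ K < ∞) := ⟨hK.lt_top⟩
  have hsub : ∫ x, (ψ (f x) - ψ 0) ∂μ = ∫ x, (ψ (f x) - ψ 0) ∂μ.restrict K := by
    refine (setIntegral_eq_integral_of_forall_compl_eq_zero fun x hx => ?_).symm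
    rw [hfK x hx, sub_self]
  have h_int : Integrable (fun x => ψ (f x)) (μ.restrict K) :=
    .of_bound (ψ.continuous.measurable.comp hf).aestronglyMeasurable ‖ψ‖
      (ae_of_all _ fun x => ψ.norm_coe_le_norm _)
  rw [integral_map hf.aemeasurable ψ.continuous.aestronglyMeasurable, hsub,
    integral_sub h_int (integrable_const _), integral_const, smul_eq_mul,
    measureReal_restrict_apply_univ, sub_add_cancel]

end LayerCake

lemma exists_ball_of_le_of_norm_lt {V : Type*} [NormedAddCommGroup V] {h : V → ℝ}
    (hc : HasCompactSupport h)
    (hr : ∀ x y, ‖x‖ < ‖y‖ → h y ≤ h x) {a : ℝ} (ha : 0 < a) :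
    ∃ r : ℝ, ball (0 : V) r ⊆ {x | a ≤ h x} ∧ {x | a ≤ h x} ⊆ closedBall (0 : V) r := by
  obtain ⟨R, hR⟩ := hc.isCompact.isBounded.subset_closedBall (0 : V)
  have hsub : {x | a ≤ h x} ⊆ closedBall (0 : V) R := fun x hx =>
    hR (subset_tsupport _ (ha.trans_le hx).ne')
  rcases Set.eq_empty_or_nonempty {x | a ≤ h x} with hempty | hne
  · exact ⟨0, by simp, by simp [hempty]⟩
  have hbdd : BddAbove (norm '' {x | a ≤ h x}) :=
    ⟨R, Set.forall_mem_image.2 fun x hx => by simpa using hsub hx⟩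
  refine ⟨sSup (norm '' {x | a ≤ h x}), fun x hx => ?_, fun x hx => ?_⟩
  · obtain ⟨_, ⟨y, hy, rfl⟩, hxy⟩ := exists_lt_of_lt_csSup (hne.image _) (mem_ball_zero_iff.1 hx)
    exact le_trans hy (hr x y hxy)
  · exact mem_closedBall_zero_iff.2 (le_csSup hbdd ⟨x, hx, rfl⟩)

lemma min_measure_le_measure_inter {V : Type*} [NormedAddCommGroup V] [MeasurableSpace V]
    {μ : Measure V} {A B : Set V} {r t : ℝ} (hA : A =ᵐ[μ] ball (0 : V) r)
    (hB : B =ᵐ[μ] ball (0 : V) t) : min (μ A) (μ B) ≤ μ (A ∩ B) := by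
  rw [measure_congr (hA.inter hB), measure_congr hA, measure_congr hB]
  rcases le_total r t with h | h
  · rw [Set.inter_eq_left.2 (ball_subset_ball h)]
    exact min_le_left _ _
  · rw [Set.inter_eq_right.2 (ball_subset_ball h)]
    exact min_le_right _ _

section RadialRearr

variable {V : Type*} [NormedAddCommGroup V] [InnerProductSpace ℝ V] [FiniteDimensional ℝ V]
  [MeasurableSpace V] [BorelSpace V] {f h ρ g : V → ℝ}

/-- `g` is a symmetric decreasing rearrangement of the nonnegative function `f`: its superlevel
sets are balls, open, closed or in between, of the same volume as those of `f`. -/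
structure IsRadialRearr (f g : V → ℝ) : Prop where
  nonneg : ∀ x, 0 ≤ g x
  exists_ball : ∀ a : ℝ, 0 < a →
    ∃ r : ℝ, ball (0 : V) r ⊆ {x | a ≤ g x} ∧ {x | a ≤ g x} ⊆ closedBall (0 : V) r
  volume_le_eq : ∀ a : ℝ, 0 < a → volume {x | a ≤ g x} = volume {x | a ≤ f x}

lemma IsRadialRearr.volume_lt_eq (hg : IsRadialRearr ρ g) {a : ℝ} (ha : 0 ≤ a) :
    volume {x | a < g x} = volume {x | a < ρ x} :=
  measure_lt_eq_of_measure_le_eq hg.volume_le_eq ha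

lemma Equidistributed.volume_le_eq (hfh : Equidistributed f h) (hf : Continuous f)
    (hfc : HasCompactSupport f) (hh : Continuous h) (hhc : HasCompactSupport h) {a : ℝ}
    (ha : 0 < a) : volume {x | a ≤ h x} = volume {x | a ≤ f x} := by
  have hK : IsCompact (tsupport f ∪ tsupport h) := hfc.isCompact.union hhc.isCompact
  have hfK : ∀ x ∉ tsupport f ∪ tsupport h, f x = 0 := fun x hx =>
    image_eq_zero_of_notMem_tsupport fun h' => hx (.inl h')
  have hhK : ∀ x ∉ tsupport f ∪ tsupport h, h x = 0 := fun x hx =>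
    image_eq_zero_of_notMem_tsupport fun h' => hx (.inr h')
  have : Fact (volume (tsupport f ∪ tsupport h) < ∞) := ⟨hK.measure_lt_top⟩
  have hmap : (volume.restrict (tsupport f ∪ tsupport h)).map h =
      (volume.restrict (tsupport f ∪ tsupport h)).map f := by
    refine ext_of_forall_integral_eq_of_IsFiniteMeasure fun ψ => ?_
    rw [integral_map_restrict hK.measure_ne_top hh.measurable hhK,
      integral_map_restrict hK.measure_ne_top hf.measurable hfK,
      hfh (fun t => ψ t - ψ 0) (by fun_prop) (sub_self _)]
  rw [← map_restrict_Ici_apply hh.measurable hhK ha, hmap,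
    map_restrict_Ici_apply hf.measurable hfK ha]

lemma exists_isRadialRearr_interaction_le {φ : ℝ → ℝ} (hφ : Antitone φ) {N : ℝ}
    (hN : ∀ r, |φ r| ≤ N) (hf : Continuous f) (hfc : HasCompactSupport f) (hf0 : ∀ x, 0 ≤ f x) :
    ∃ h, IsRadialRearr f h ∧ interaction φ f ≤ interaction φ h := by
  obtain ⟨h, hh, hhc, hh0, hr, hfh, hI⟩ := exists_radial_rearrangement hφ hN hf hfc hf0
  exact ⟨h, ⟨hh0, fun _ => exists_ball_of_le_of_norm_lt hhc hr,
    fun _ => hfh.volume_le_eq hf hfc hh hhc⟩, hI⟩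

variable [Nontrivial V]

lemma ae_eq_ball_of_subset {A : Set V} {r : ℝ} (hA : ball (0 : V) r ⊆ A)
    (hA' : A ⊆ closedBall (0 : V) r) : A =ᵐ[volume] ball (0 : V) r := by
  refine (ae_eq_of_subset_of_measure_ge hA ?_ measurableSet_ball.nullMeasurableSet ?_).symm
  · rw [← Measure.addHaar_closedBall_eq_addHaar_ball]
    exact measure_mono hA'
  · exact ((measure_mono hA').trans_lt measure_closedBall_lt_top).ne

namespace IsRadialRearr

lemma exists_ae_eq_ball (hg : IsRadialRearr ρ g) {a : ℝ} (ha : 0 < a) :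
    ∃ r : ℝ, {x | a ≤ g x} =ᵐ[volume] ball (0 : V) r :=
  (hg.exists_ball a ha).imp fun _ hr => ae_eq_ball_of_subset hr.1 hr.2

lemma aemeasurable (hg : IsRadialRearr ρ g) : AEMeasurable g := by
  have hlevel (a : ℝ) : NullMeasurableSet (g ⁻¹' Set.Ici a) := by
    rcases le_or_gt a 0 with ha | ha
    · rw [show g ⁻¹' Set.Ici a = Set.univ from
        Set.eq_univ_of_forall fun x => ha.trans (hg.nonneg x)]
      exact .univ
    · obtain ⟨r, hr⟩ := hg.exists_ae_eq_ball ha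
      exact measurableSet_ball.nullMeasurableSet.congr hr.symm
  have hnull : NullMeasurable g := measurable_of_Ici (δ := NullMeasurableSpace V volume) hlevel
  exact hnull.aemeasurable

lemma integrable (hg : IsRadialRearr ρ g) (hρ : Integrable ρ) (hρ0 : ∀ x, 0 ≤ ρ x) :
    Integrable g :=
  integrable_of_measure_lt_eq hρ hg.aemeasurable hρ0 hg.nonneg fun _ ha => hg.volume_lt_eq ha.le

lemma integral_eq (hg : IsRadialRearr ρ g) (hρ : AEMeasurable ρ) (hρ0 : ∀ x, 0 ≤ ρ x) :
    ∫ x, g x = ∫ x, ρ x :=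
  integral_eq_of_measure_lt_eq hρ hg.aemeasurable hρ0 hg.nonneg fun _ ha => hg.volume_lt_eq ha.le

lemma lintegral_min_le (hh : IsRadialRearr f h) (hg : IsRadialRearr ρ g) (hf : AEMeasurable f)
    (hρ : AEMeasurable ρ) (hf0 : ∀ x, 0 ≤ f x) (hρ0 : ∀ x, 0 ≤ ρ x) :
    ∫⁻ x, ENNReal.ofReal (min (f x) (ρ x)) ≤ ∫⁻ x, ENNReal.ofReal (min (h x) (g x)) := by
  rw [lintegral_eq_lintegral_meas_le _ (ae_of_all _ fun x => le_min (hf0 x) (hρ0 x)) (hf.min hρ),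
    lintegral_eq_lintegral_meas_le _ (ae_of_all _ fun x => le_min (hh.nonneg x) (hg.nonneg x))
      (hh.aemeasurable.min hg.aemeasurable)]
  refine setLIntegral_mono' measurableSet_Ioi fun a ha => ?_
  obtain ⟨r, hr⟩ := hh.exists_ae_eq_ball ha
  obtain ⟨t, ht⟩ := hg.exists_ae_eq_ball ha
  simp only [le_min_iff, Set.ofPred_and]
  refine le_trans ?_ (min_measure_le_measure_inter hr ht)
  rw [hh.volume_le_eq a ha, hg.volume_le_eq a ha]
  exact le_min (measure_mono Set.inter_subset_left) (measure_mono Set.inter_subset_right)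

lemma integral_min_le (hh : IsRadialRearr f h) (hg : IsRadialRearr ρ g) (hf : Integrable f)
    (hρ : Integrable ρ) (hf0 : ∀ x, 0 ≤ f x) (hρ0 : ∀ x, 0 ≤ ρ x) :
    ∫ x, min (f x) (ρ x) ≤ ∫ x, min (h x) (g x) := by
  have hhg : Integrable fun x => min (h x) (g x) :=
    (hh.integrable hf hf0).inf (hg.integrable hρ hρ0)
  have hhg0 := ae_of_all volume fun x => le_min (hh.nonneg x) (hg.nonneg x)
  rw [integral_eq_lintegral_of_nonneg_ae (ae_of_all _ fun x => le_min (hf0 x) (hρ0 x))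
      (hf.inf hρ).1, integral_eq_lintegral_of_nonneg_ae hhg0 hhg.1]
  exact ENNReal.toReal_mono ((hasFiniteIntegral_iff_ofReal hhg0).1 hhg.2).ne
    (hh.lintegral_min_le hg hf.aemeasurable hρ.aemeasurable hf0 hρ0)

end IsRadialRearr

lemma integral_abs_sub_eq {α : Type*} [MeasurableSpace α] {μ : Measure α} {u v : α → ℝ}
    (hu : Integrable u μ) (hv : Integrable v μ) :
    ∫ x, |u x - v x| ∂μ = (∫ x, u x ∂μ) + (∫ x, v x ∂μ) - 2 * ∫ x, min (u x) (v x) ∂μ := by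
  have hmin : Integrable (fun x => 2 * min (u x) (v x)) μ := (hu.inf hv).const_mul 2
  have hadd : Integrable (fun x => u x + v x) μ := hu.add hv
  rw [← integral_add hu hv, ← integral_const_mul, ← integral_sub hadd hmin]
  refine integral_congr_ae (ae_of_all _ fun x => ?_)
  have hmax := max_sub_min_eq_abs' (u x) (v x)
  have hsum := max_add_min (u x) (v x)
  simp only
  linarith

lemma IsRadialRearr.integral_abs_sub_le (hh : IsRadialRearr f h) (hg : IsRadialRearr ρ g)
    (hf : Integrable f) (hρ : Integrable ρ) (hf0 : ∀ x, 0 ≤ f x) (hρ0 : ∀ x, 0 ≤ ρ x) :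
    ∫ x, |h x - g x| ≤ ∫ x, |f x - ρ x| := by
  rw [integral_abs_sub_eq (hh.integrable hf hf0) (hg.integrable hρ hρ0),
    integral_abs_sub_eq hf hρ, hh.integral_eq hf.aemeasurable hf0,
    hg.integral_eq hρ.aemeasurable hρ0]
  linarith [hh.integral_min_le hg hf hρ hf0 hρ0]

end RadialRearr

section Riesz

variable {V : Type*} [NormedAddCommGroup V] [InnerProductSpace ℝ V] [FiniteDimensional ℝ V]
  [MeasurableSpace V] [BorelSpace V] {φ : ℝ → ℝ} {N : ℝ}

lemma integral_mul_le_mul_integral_abs (hφ : Measurable φ) (hN : ∀ r, |φ r| ≤ N) {u v : V → ℝ}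
    (hu : Integrable u) (hv : Integrable v) :
    ∫ q : V × V, φ (dist q.1 q.2) * (u q.1 * v q.2) ≤ N * ((∫ x, |u x|) * ∫ x, |v x|) := by
  rw [← integral_prod_mul, ← integral_const_mul]
  refine integral_mono (integrable_interaction hφ hN hu hv)
    ((hu.abs.mul_prod hv.abs).const_mul N) fun q => (le_abs_self _).trans ?_
  simp only [abs_mul]
  exact mul_le_mul_of_nonneg_right (hN _) (by positivity)

lemma interaction_sub_le (hφ : Measurable φ) (hN : ∀ r, |φ r| ≤ N) {f g : V → ℝ}
    (hf : Integrable f) (hg : Integrable g) :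
    interaction φ f - interaction φ g ≤
      N * (∫ x, |f x - g x|) * ((∫ x, |f x|) + ∫ x, |g x|) := by
  have hfg : Integrable fun x => f x - g x := hf.sub hg
  have hsplit : interaction φ f - interaction φ g =
      (∫ q : V × V, φ (dist q.1 q.2) * ((f q.1 - g q.1) * f q.2)) +
        ∫ q : V × V, φ (dist q.1 q.2) * (g q.1 * (f q.2 - g q.2)) := by
    rw [interaction, interaction, ← integral_sub, ← integral_add]
    · congr 1; funext q; ring
    · exact integrable_interaction hφ hN hfg hf
    · exact integrable_interaction hφ hN hg hfg
    · exact integrable_interaction hφ hN hf hf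
    · exact integrable_interaction hφ hN hg hg
  rw [hsplit]
  linarith [integral_mul_le_mul_integral_abs hφ hN hfg hf,
    integral_mul_le_mul_integral_abs hφ hN hg hfg]

lemma exists_continuous_nonneg_integral_abs_sub_le {ρ : V → ℝ} (hρ : Integrable ρ)
    (hρ0 : ∀ x, 0 ≤ ρ x) {ε : ℝ} (hε : 0 < ε) :
    ∃ f : V → ℝ, Continuous f ∧ HasCompactSupport f ∧ (∀ x, 0 ≤ f x) ∧
      ∫ x, |ρ x - f x| ≤ ε := by
  obtain ⟨u, huc, huε, hu, hui⟩ := hρ.exists_hasCompactSupport_integral_sub_le hε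
  have hf : Continuous fun x => max (u x) 0 := hu.max continuous_const
  have hfc : HasCompactSupport fun x => max (u x) 0 :=
    huc.comp_left (g := fun t => max t 0) (max_self 0)
  refine ⟨fun x => max (u x) 0, hf, hfc, fun x => le_max_right _ _, ?_⟩
  refine (integral_mono (hρ.sub (hf.integrable_of_hasCompactSupport hfc)).abs
    (hρ.sub hui).norm fun x => ?_).trans huε
  simpa [max_eq_left (hρ0 x)] using abs_max_sub_max_le_abs (ρ x) (u x) 0

theorem IsRadialRearr.riesz_interaction_le [Nontrivial V] {ρ g : V → ℝ} (hg : IsRadialRearr ρ g)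
    (hφ : Antitone φ) (hN : ∀ r, |φ r| ≤ N) (hρ : Integrable ρ) (hρ0 : ∀ x, 0 ≤ ρ x) :
    interaction φ ρ ≤ interaction φ g := by
  set m := ∫ x, ρ x with hm
  have hN0 : 0 ≤ N := (abs_nonneg _).trans (hN 0)
  have approx (ε : ℝ) (hε : 0 < ε) :
      interaction φ ρ ≤ interaction φ g + 2 * (N * ε * (m + (m + ε))) := by
    obtain ⟨f, hf, hfc, hf0, hfε⟩ := exists_continuous_nonneg_integral_abs_sub_le hρ hρ0 hε
    have hfi := hf.integrable_of_hasCompactSupport hfc (μ := volume)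
    obtain ⟨h, hh, hI⟩ := exists_isRadialRearr_interaction_le hφ hN hf hfc hf0
    have hfm : (∫ x, f x) - m ≤ ε := by
      rw [hm, ← integral_sub hfi hρ]
      refine (integral_mono (hfi.sub hρ) (hρ.sub hfi).abs fun x => ?_).trans hfε
      exact (le_abs_self _).trans_eq (abs_sub_comm _ _)
    have hhg := hh.integral_abs_sub_le hg hfi hρ hf0 hρ0
    simp only [abs_sub_comm (f _)] at hhg
    have hρf := interaction_sub_le hφ.measurable hN hρ hfi
    have hhg' := interaction_sub_le hφ.measurable hN (hh.integrable hfi hf0) (hg.integrable hρ hρ0)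
    simp only [abs_of_nonneg (hρ0 _), abs_of_nonneg (hf0 _), abs_of_nonneg (hh.nonneg _),
      abs_of_nonneg (hg.nonneg _)] at hρf hhg'
    rw [hh.integral_eq hfi.aemeasurable hf0, hg.integral_eq hρ.aemeasurable hρ0, add_comm] at hhg'
    have hf_nonneg : 0 ≤ ∫ x, f x := integral_nonneg hf0
    have hm_nonneg : 0 ≤ m := integral_nonneg hρ0
    have bound {d : ℝ} (hd : d ≤ ε) : N * d * (m + ∫ x, f x) ≤ N * ε * (m + (m + ε)) := by
      gcongr
      linarith
    linarith [bound hfε, bound (hhg.trans hfε)]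
  have hcont : Continuous fun ε : ℝ => interaction φ g + 2 * (N * ε * (m + (m + ε))) := by
    fun_prop
  have hlim : Tendsto (fun ε : ℝ => interaction φ g + 2 * (N * ε * (m + (m + ε))))
      (nhdsWithin 0 (Set.Ioi 0)) (nhds (interaction φ g)) := by
    simpa using (hcont.tendsto 0).mono_left nhdsWithin_le_nhds
  exact ge_of_tendsto hlim (eventually_mem_nhdsWithin.mono approx)

end Riesz

section BallVolume

variable {V : Type*} [NormedAddCommGroup V] [InnerProductSpace ℝ V] [FiniteDimensional ℝ V]
  [MeasurableSpace V] [BorelSpace V] {r R : ℝ}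

lemma volume_ball_sdiff_ball (x : V) (h : R ≤ r) :
    volume (ball x r \ ball x R) = volume (ball x r) - volume (ball x R) :=
  measure_sdiff (ball_subset_ball h) measurableSet_ball.nullMeasurableSet measure_ball_lt_top.ne

variable [Nontrivial V]

lemma volume_ball_le_volume_ball_iff (x y : V) (hr : 0 ≤ r) (hR : 0 ≤ R) :
    volume (ball x r) ≤ volume (ball y R) ↔ r ≤ R := by
  rw [Measure.addHaar_ball _ x hr, Measure.addHaar_ball _ y hR,
    ENNReal.mul_le_mul_iff_left (measure_ball_pos _ _ one_pos).ne' measure_ball_lt_top.ne,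
    ENNReal.ofReal_le_ofReal_iff (by positivity),
    pow_le_pow_iff_left₀ hr hR Module.finrank_pos.ne']

lemma volume_ball_add_volume_ball_le (x y z : V) (hr : 0 ≤ r) (hR : 0 ≤ R) :
    volume (ball x r) + volume (ball y R) ≤ volume (ball z (r + R)) := by
  rw [Measure.addHaar_ball _ x hr, Measure.addHaar_ball _ y hR,
    Measure.addHaar_ball _ z (by positivity), ← add_mul,
    ← ENNReal.ofReal_add (by positivity) (by positivity)]
  gcongr
  exact pow_add_pow_le hr hR Module.finrank_pos.ne'

lemma exists_volume_ball_eq (x : V) {v : ℝ≥0∞} (hv : v ≠ ∞) :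
    ∃ r : ℝ, 0 ≤ r ∧ volume (ball x r) = v := by
  have hunit : volume (ball (0 : V) 1) ≠ 0 := (measure_ball_pos _ _ one_pos).ne'
  set w := v / volume (ball (0 : V) 1)
  refine ⟨w.toReal ^ ((Module.finrank ℝ V : ℝ)⁻¹), by positivity, ?_⟩
  rw [Measure.addHaar_ball _ x (by positivity),
    Real.rpow_inv_natCast_pow ENNReal.toReal_nonneg Module.finrank_pos.ne',
    ENNReal.ofReal_toReal (ENNReal.div_ne_top hv hunit),
    ENNReal.div_mul_cancel hunit measure_ball_lt_top.ne]

lemma volume_ball_sdiff_ball_lt_iff (x : V) {s : ℝ} (hR : 0 ≤ R) (hr : R ≤ r) (hs : R ≤ s) :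
    volume (ball x r \ ball x R) < volume (ball x s \ ball x R) ↔ r < s := by
  rw [volume_ball_sdiff_ball x hr, volume_ball_sdiff_ball x hs, ← not_le,
    tsub_le_tsub_iff_right (measure_mono (ball_subset_ball hr)),
    volume_ball_le_volume_ball_iff x x (hR.trans hs) (hR.trans hr), not_le]

lemma exists_volume_ball_sdiff_ball_eq (x : V) (hR : 0 ≤ R) {v : ℝ≥0∞} (hv : v ≠ ∞) :
    ∃ r, R ≤ r ∧ volume (ball x r \ ball x R) = v := by
  obtain ⟨r, hr0, hr⟩ := exists_volume_ball_eq x (v := v + volume (ball x R))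
    (ENNReal.add_ne_top.2 ⟨hv, measure_ball_lt_top.ne⟩)
  have hRr : R ≤ r := (volume_ball_le_volume_ball_iff x x hR hr0).1 (hr ▸ le_add_self)
  exact ⟨r, hRr, by
    rw [volume_ball_sdiff_ball x hRr, hr, ENNReal.add_sub_cancel_right measure_ball_lt_top.ne]⟩

lemma volume_le_volume_ball_diam {s : Set V} (hs : Bornology.IsBounded s) (x : V) :
    volume s ≤ volume (ball x (diam s)) := by
  rcases s.eq_empty_or_nonempty with rfl | ⟨z, hz⟩
  · simp
  calc volume s ≤ volume (closedBall z (diam s)) :=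
        measure_mono fun y hy => dist_le_diam_of_mem hs hy hz
    _ = volume (ball x (diam s)) := by
        rw [Measure.addHaar_closedBall_eq_addHaar_ball, Measure.addHaar_ball_center,
          Measure.addHaar_ball_center _ x]

end BallVolume

section Density

variable {V : Type*} [NormedAddCommGroup V] [InnerProductSpace ℝ V] [FiniteDimensional ℝ V]
  [MeasurableSpace V] [BorelSpace V]

/-- Densities bounded by one with bounded support; the support need not be closed. -/
structure IsDensity (f : V → ℝ) : Prop where
  nonneg : ∀ x, 0 ≤ f x
  integrable : Integrable f
  le_one : ∀ᵐ x, f x ≤ 1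
  isBounded_support : Bornology.IsBounded (Function.support f)

namespace IsDensity

variable {f g : V → ℝ}

lemma volume_pos_ne_top (hf : IsDensity f) : volume {x | 0 < f x} ≠ ∞ :=
  ((measure_mono fun _ hx => (ne_of_gt hx : f _ ≠ 0)).trans_lt
    hf.isBounded_support.measure_lt_top).ne

lemma volume_pos_ne_zero (hf : IsDensity f) (hf1 : ∫ x, f x ≠ 0) : volume {x | 0 < f x} ≠ 0 := by
  intro h
  have hnonpos : ∀ᵐ x, f x ≤ 0 := by simpa [ae_iff] using h
  exact hf1 (integral_eq_zero_of_ae (hnonpos.mono fun x hx => le_antisymm hx (hf.nonneg x)))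

lemma of_volume_lt_eq (hf : IsDensity f) (hg : AEMeasurable g) (hg0 : ∀ x, 0 ≤ g x)
    (hgb : Bornology.IsBounded (Function.support g))
    (h : ∀ a : ℝ, 0 ≤ a → volume {x | a < g x} = volume {x | a < f x}) : IsDensity g where
  nonneg := hg0
  integrable := integrable_of_measure_lt_eq hf.integrable hg hf.nonneg hg0 fun a ha => h a ha.le
  le_one := by
    have hf1 : volume {x | 1 < f x} = 0 := by simpa [ae_iff] using hf.le_one
    simpa [ae_iff] using (h 1 zero_le_one).trans hf1
  isBounded_support := hgb

lemma indicator (hf : IsDensity f) {s : Set V} (hs : MeasurableSet s) :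
    IsDensity (s.indicator f) where
  nonneg := Set.indicator_nonneg fun x _ => hf.nonneg x
  integrable := hf.integrable.indicator hs
  le_one := hf.le_one.mono fun _ hx => Set.indicator_apply_le' (fun _ => hx) fun _ => zero_le_one
  isBounded_support := hf.isBounded_support.subset
    (Set.support_indicator.trans_subset Set.inter_subset_right)

variable [Nontrivial V]

lemma volume_pos_le_volume_ball_diam (hf : IsDensity f) (x : V) :
    volume {y | 0 < f y} ≤ volume (ball x (diam (Function.support f))) :=
  (measure_mono fun _ hy => (ne_of_gt hy : f _ ≠ 0)).trans
    (volume_le_volume_ball_diam hf.isBounded_support x)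

lemma diam_support_pos (hf : IsDensity f) (hf1 : ∫ x, f x ≠ 0) :
    0 < diam (Function.support f) := by
  refine diam_nonneg.lt_of_ne fun hD => hf.volume_pos_ne_zero hf1 ?_
  simpa [← hD] using hf.volume_pos_le_volume_ball_diam 0

end IsDensity

end Density

section SingularKernel

variable {V : Type*} [NormedAddCommGroup V] [InnerProductSpace ℝ V] [FiniteDimensional ℝ V]
  [MeasurableSpace V] [BorelSpace V] [Nontrivial V] {φ : ℝ → ℝ} {f ρ g : V → ℝ}

lemma ae_fst_ne_snd : ∀ᵐ q : V × V, q.1 ≠ q.2 := by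
  rw [ae_iff, Measure.volume_eq_prod]
  simp only [ne_eq, not_not]
  rw [Measure.measure_prod_null (measurableSet_eq_fun measurable_fst measurable_snd)]
  refine ae_of_all _ fun x => ?_
  have hfiber : Prod.mk x ⁻¹' {q : V × V | q.1 = q.2} = {x} := by ext; simp [eq_comm]
  simp [hfiber]

lemma antitone_comp_max (hφ : AntitoneOn φ (Set.Ioi 0)) {ε : ℝ} (hε : 0 < ε) :
    Antitone fun r => φ (max r ε) := fun _ _ h =>
  hφ (lt_max_of_lt_right hε) (lt_max_of_lt_right hε) (max_le_max_right ε h)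

lemma abs_comp_max_le (hφ : AntitoneOn φ (Set.Ioi 0)) (hφ0 : ∀ r, 0 < r → 0 ≤ φ r) {ε : ℝ}
    (hε : 0 < ε) (r : ℝ) : |φ (max r ε)| ≤ φ ε := by
  rw [abs_of_nonneg (hφ0 _ (lt_max_of_lt_right hε))]
  exact hφ hε (lt_max_of_lt_right hε) (le_max_right r ε)

lemma tendsto_interaction_comp_max (hφ : AntitoneOn φ (Set.Ioi 0))
    (hφ0 : ∀ r, 0 < r → 0 ≤ φ r) (hf : Integrable f) (hf0 : ∀ x, 0 ≤ f x)
    (hφf : Integrable fun q : V × V => φ (dist q.1 q.2) * (f q.1 * f q.2)) :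
    Tendsto (fun n : ℕ => interaction (fun r => φ (max r (1 / (n + 1)))) f) atTop
      (nhds (interaction φ f)) := by
  have hε (n : ℕ) : (0 : ℝ) < 1 / (n + 1) := Nat.one_div_pos_of_nat
  refine tendsto_integral_of_dominated_convergence _ (fun n => (integrable_interaction
    (antitone_comp_max hφ (hε n)).measurable (abs_comp_max_le hφ hφ0 (hε n)) hf
    hf).aestronglyMeasurable) hφf (fun n => ?_) ?_
  · filter_upwards [ae_fst_ne_snd] with q hq
    have hd : 0 < dist q.1 q.2 := dist_pos.2 hq
    have hff : 0 ≤ f q.1 * f q.2 := mul_nonneg (hf0 _) (hf0 _)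
    rw [Real.norm_of_nonneg (mul_nonneg (hφ0 _ (lt_max_of_lt_left hd)) hff)]
    exact mul_le_mul_of_nonneg_right (hφ hd (lt_max_of_lt_left hd) (le_max_left _ _)) hff
  · filter_upwards [ae_fst_ne_snd] with q hq
    have hlt := tendsto_one_div_add_atTop_nhds_zero_nat.eventually (gt_mem_nhds (dist_pos.2 hq))
    refine tendsto_const_nhds.congr' (hlt.mono fun n hn => ?_)
    simp only [max_eq_left hn.le]

theorem IsRadialRearr.riesz_interaction_le_of_antitoneOn (hg : IsRadialRearr ρ g)
    (hφ : AntitoneOn φ (Set.Ioi 0)) (hφ0 : ∀ r, 0 < r → 0 ≤ φ r) (hρ : Integrable ρ)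
    (hρ0 : ∀ x, 0 ≤ ρ x)
    (hφρ : Integrable fun q : V × V => φ (dist q.1 q.2) * (ρ q.1 * ρ q.2))
    (hφg : Integrable fun q : V × V => φ (dist q.1 q.2) * (g q.1 * g q.2)) :
    interaction φ ρ ≤ interaction φ g := by
  have hε (n : ℕ) : (0 : ℝ) < 1 / (n + 1) := Nat.one_div_pos_of_nat
  exact le_of_tendsto_of_tendsto' (tendsto_interaction_comp_max hφ hφ0 hρ hρ0 hφρ)
    (tendsto_interaction_comp_max hφ hφ0 (hg.integrable hρ hρ0) hg.nonneg hφg) fun n =>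
      hg.riesz_interaction_le (antitone_comp_max hφ (hε n)) (abs_comp_max_le hφ hφ0 (hε n)) hρ hρ0

end SingularKernel

section LogKernel

variable {V : Type*} [NormedAddCommGroup V] [InnerProductSpace ℝ V] [FiniteDimensional ℝ V]
  [MeasurableSpace V] [BorelSpace V]

lemma abs_log_eq_posLog_add_posLog_inv (r : ℝ) : |Real.log r| = log⁺ r + log⁺ r⁻¹ := by
  linarith [Real.half_mul_log_add_log_abs (x := r), Real.posLog_sub_posLog_inv (x := r)]

lemma posLog_le_abs_log (r : ℝ) : log⁺ r ≤ |Real.log r| :=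
  (abs_log_eq_posLog_add_posLog_inv r).symm ▸ le_add_of_nonneg_right Real.posLog_nonneg

lemma posLog_inv_le_abs_log (r : ℝ) : log⁺ r⁻¹ ≤ |Real.log r| :=
  (abs_log_eq_posLog_add_posLog_inv r).symm ▸ le_add_of_nonneg_left Real.posLog_nonneg

lemma abs_log_div_le (r D : ℝ) : |Real.log (r / D)| ≤ |Real.log D| + |Real.log r| := by
  rcases eq_or_ne r 0 with rfl | hr
  · simp
  rcases eq_or_ne D 0 with rfl | hD
  · simp
  · rw [Real.log_div hr hD, add_comm]
    exact abs_sub _ _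

lemma integrable_posLog_inv_norm [Nontrivial V] : Integrable fun z : V => log⁺ ‖z‖⁻¹ := by
  refine (integrable_fun_norm_addHaar volume (f := fun y => log⁺ y⁻¹)).2 ?_
  have hlog : IntegrableOn (fun y => |Real.log y|) (Set.Ioc 0 1) :=
    ((intervalIntegrable_iff_integrableOn_Ioc_of_le zero_le_one).1
      intervalIntegral.intervalIntegrable_log').abs
  refine (hlog.integrable_indicator measurableSet_Ioc).integrableOn.mono' ?_ ?_
  · exact ((measurable_id.pow_const _).smul
      (Real.continuous_posLog.measurable.comp measurable_inv)).aestronglyMeasurable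
  refine (ae_restrict_iff' measurableSet_Ioi).2 (ae_of_all _ fun y (hy : 0 < y) => ?_)
  rw [norm_smul, Real.norm_of_nonneg (by positivity), Real.norm_of_nonneg Real.posLog_nonneg]
  by_cases hy1 : y ≤ 1
  · rw [Set.indicator_of_mem (Set.mem_Ioc.2 ⟨hy, hy1⟩)]
    exact (mul_le_of_le_one_left Real.posLog_nonneg (pow_le_one₀ hy.le hy1)).trans
      (posLog_inv_le_abs_log y)
  · have hzero : log⁺ y⁻¹ = 0 := by
      rw [Real.posLog_eq_zero_iff, abs_of_pos (inv_pos.2 hy)]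
      exact inv_le_one_of_one_le₀ (not_le.1 hy1).le
    rw [hzero, mul_zero]
    exact Set.indicator_nonneg (fun _ _ => abs_nonneg _) y

variable (V) in
/-- The integral over `V` of the singular part `log⁺ ‖z‖⁻¹` of the logarithmic kernel. -/
def singularMass : ℝ := ∫ z : V, log⁺ ‖z‖⁻¹

lemma singularMass_nonneg : 0 ≤ singularMass V := integral_nonneg fun _ => Real.posLog_nonneg

lemma integrable_posLog_inv_dist_mul_snd [Nontrivial V] {u : V → ℝ} (hu : Integrable u) :
    Integrable fun q : V × V => log⁺ (dist q.1 q.2)⁻¹ * u q.2 := by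
  refine (Integrable.convolution_integrand (ContinuousLinearMap.mul ℝ ℝ) hu
    integrable_posLog_inv_norm).congr (ae_of_all _ fun q => ?_)
  simp only [ContinuousLinearMap.mul_apply', dist_eq_norm, mul_comm]

lemma integral_posLog_inv_dist_mul_snd [Nontrivial V] {u : V → ℝ} (hu : Integrable u) :
    ∫ q : V × V, log⁺ (dist q.1 q.2)⁻¹ * u q.2 = singularMass V * ∫ x, u x := by
  rw [Measure.volume_eq_prod, integral_prod_symm _ (integrable_posLog_inv_dist_mul_snd hu),
    ← integral_const_mul]
  simp_rw [integral_mul_const, dist_eq_norm]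
  simp_rw [integral_sub_right_eq_self (fun z : V => log⁺ ‖z‖⁻¹), singularMass]

lemma integrable_posLog_inv_dist_mul_fst [Nontrivial V] {u : V → ℝ} (hu : Integrable u) :
    Integrable fun q : V × V => log⁺ (dist q.1 q.2)⁻¹ * u q.1 := by
  refine (Integrable.swap (μ := volume) (ν := volume)
    (integrable_posLog_inv_dist_mul_snd hu)).congr (ae_of_all _ fun q => ?_)
  simp only [Function.comp_apply, Prod.fst_swap, Prod.snd_swap, dist_comm]

lemma integral_posLog_inv_dist_mul_fst [Nontrivial V] {u : V → ℝ} (hu : Integrable u) :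
    ∫ q : V × V, log⁺ (dist q.1 q.2)⁻¹ * u q.1 = singularMass V * ∫ x, u x := by
  rw [← integral_posLog_inv_dist_mul_snd hu, Measure.volume_eq_prod, ← integral_prod_swap]
  simp only [Prod.fst_swap, Prod.snd_swap, dist_comm]

namespace IsDensity

variable {f : V → ℝ}

lemma ae_fst_le_one (hf : IsDensity f) : ∀ᵐ q : V × V, f q.1 ≤ 1 :=
  Measure.quasiMeasurePreserving_fst.ae hf.le_one

lemma ae_snd_le_one (hf : IsDensity f) : ∀ᵐ q : V × V, f q.2 ≤ 1 :=
  Measure.quasiMeasurePreserving_snd.ae hf.le_one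

lemma integrable_mul_prod (hf : IsDensity f) : Integrable fun q : V × V => f q.1 * f q.2 :=
  hf.integrable.mul_prod hf.integrable

variable [Nontrivial V]

lemma integrable_log (hf : IsDensity f) :
    Integrable fun q : V × V => Real.log (dist q.1 q.2) * (f q.1 * f q.2) := by
  refine ((hf.integrable_mul_prod.const_mul (log⁺ (diam (Function.support f)))).add
    (integrable_posLog_inv_dist_mul_snd hf.integrable)).mono' ?_ ?_
  · exact (Real.measurable_log.comp measurable_dist).aestronglyMeasurable.mul
      hf.integrable_mul_prod.aestronglyMeasurable
  filter_upwards [hf.ae_fst_le_one] with q hq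
  have hff := mul_nonneg (hf.nonneg q.1) (hf.nonneg q.2)
  have hfar : log⁺ (dist q.1 q.2) * (f q.1 * f q.2) ≤
      log⁺ (diam (Function.support f)) * (f q.1 * f q.2) := by
    rcases eq_or_ne (f q.1 * f q.2) 0 with h0 | h0
    · simp [h0]
    · exact mul_le_mul_of_nonneg_right (Real.posLog_le_posLog dist_nonneg <| dist_le_diam_of_mem
        hf.isBounded_support (left_ne_zero_of_mul h0) (right_ne_zero_of_mul h0)) hff
  have hnear : log⁺ (dist q.1 q.2)⁻¹ * (f q.1 * f q.2) ≤ log⁺ (dist q.1 q.2)⁻¹ * f q.2 :=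
    mul_le_mul_of_nonneg_left (mul_le_of_le_one_left (hf.nonneg _) hq) Real.posLog_nonneg
  rw [Real.norm_eq_abs, abs_mul, abs_of_nonneg hff, abs_log_eq_posLog_add_posLog_inv, add_mul]
  exact add_le_add hfar hnear

lemma integrable_of_abs_le_add_abs_log (hf : IsDensity f) {k : ℝ → ℝ} (hk : Measurable k) {A : ℝ}
    (hkA : ∀ r, |k r| ≤ A + |Real.log r|) :
    Integrable fun q : V × V => k (dist q.1 q.2) * (f q.1 * f q.2) := by
  refine ((hf.integrable_mul_prod.const_mul A).add hf.integrable_log.norm).mono'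
    ((hk.comp measurable_dist).aestronglyMeasurable.mul
      hf.integrable_mul_prod.aestronglyMeasurable) (ae_of_all _ fun q => ?_)
  have hff := mul_nonneg (hf.nonneg q.1) (hf.nonneg q.2)
  simp only [Pi.add_apply, norm_mul (_ : ℝ) (f q.1 * f q.2), Real.norm_of_nonneg hff,
    ← add_mul, Real.norm_eq_abs (k _), Real.norm_eq_abs (Real.log _)]
  exact mul_le_mul_of_nonneg_right (hkA _) hff

lemma integrable_posLog_div (hf : IsDensity f) (D : ℝ) :
    Integrable fun q : V × V => log⁺ (dist q.1 q.2 / D) * (f q.1 * f q.2) :=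
  hf.integrable_of_abs_le_add_abs_log (k := fun r => log⁺ (r / D)) (A := |Real.log D|)
    (Real.continuous_posLog.measurable.comp (measurable_id.div_const D)) fun r => by
      rw [abs_of_nonneg Real.posLog_nonneg]
      exact (posLog_le_abs_log _).trans (abs_log_div_le r D)

lemma integrable_posLog_div_inv (hf : IsDensity f) (D : ℝ) :
    Integrable fun q : V × V => log⁺ (dist q.1 q.2 / D)⁻¹ * (f q.1 * f q.2) :=
  hf.integrable_of_abs_le_add_abs_log (k := fun r => log⁺ (r / D)⁻¹) (A := |Real.log D|)
    (Real.continuous_posLog.measurable.comp (measurable_id.div_const D).inv) fun r => by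
      rw [abs_of_nonneg Real.posLog_nonneg]
      exact (posLog_inv_le_abs_log _).trans (abs_log_div_le r D)

lemma interaction_log_eq (hf : IsDensity f) {D : ℝ} (hD : 0 < D) :
    interaction Real.log f = interaction (fun r => log⁺ (r / D)) f -
      interaction (fun r => log⁺ (r / D)⁻¹) f + Real.log D * (∫ x, f x) ^ 2 := by
  have hmass : (∫ x, f x) ^ 2 = ∫ q : V × V, f q.1 * f q.2 := by
    rw [Measure.volume_eq_prod, integral_prod_mul, sq]
  have hfar := hf.integrable_posLog_div D
  have hnear := hf.integrable_posLog_div_inv D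
  have hsub : Integrable fun q : V × V => log⁺ (dist q.1 q.2 / D) * (f q.1 * f q.2) -
      log⁺ (dist q.1 q.2 / D)⁻¹ * (f q.1 * f q.2) := hfar.sub hnear
  rw [hmass, interaction, interaction, interaction, ← integral_const_mul,
    ← integral_sub hfar hnear, ← integral_add hsub (hf.integrable_mul_prod.const_mul _)]
  refine integral_congr_ae ?_
  filter_upwards [ae_fst_ne_snd] with q hq
  have hlog := Real.posLog_sub_posLog_inv (x := dist q.1 q.2 / D)
  rw [Real.log_div (dist_pos.2 hq).ne' hD.ne'] at hlog
  linear_combination -(f q.1 * f q.2) * hlog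

end IsDensity

lemma antitoneOn_posLog_div_inv {D : ℝ} (hD : 0 < D) :
    AntitoneOn (fun r => log⁺ (r / D)⁻¹) (Set.Ioi 0) := fun r (hr : 0 < r) s (hs : 0 < s) hrs =>
  Real.posLog_le_posLog (by positivity) (by gcongr)

variable {ρ g : V → ℝ}

lemma interaction_eq_zero_of_dist_le {φ : ℝ → ℝ} {D : ℝ} (hφ : ∀ r, 0 ≤ r → r ≤ D → φ r = 0)
    (hg : ∀ x ∈ Function.support g, ∀ y ∈ Function.support g, dist x y ≤ D) :
    interaction φ g = 0 := by
  refine integral_eq_zero_of_ae (ae_of_all _ fun q => ?_)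
  rcases eq_or_ne (g q.1 * g q.2) 0 with h0 | h0
  · simp [h0]
  · simp [hφ _ dist_nonneg (hg _ (left_ne_zero_of_mul h0) _ (right_ne_zero_of_mul h0))]

variable [Nontrivial V]

lemma IsRadialRearr.isBounded_support (hg : IsRadialRearr ρ g)
    (hρ : Bornology.IsBounded (Function.support ρ)) :
    Bornology.IsBounded (Function.support g) := by
  obtain ⟨R, hR0, hR⟩ := hρ.subset_ball_lt 0 (0 : V)
  refine (isBounded_closedBall (x := (0 : V)) (r := R)).subset fun x hx => ?_
  have hx0 : 0 < g x := (hg.nonneg x).lt_of_ne' hx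
  obtain ⟨r, hr, hr'⟩ := hg.exists_ball (g x) hx0
  have hball : ball (0 : V) ‖x‖ ⊆ {y | 0 < g y} := fun y hy =>
    hx0.trans_le (hr (ball_subset_ball (mem_closedBall_zero_iff.1 (hr' (le_refl (g x)))) hy))
  have hsupp : {y | 0 < ρ y} ⊆ ball 0 R := fun y hy => hR (ne_of_gt hy)
  rw [mem_closedBall_zero_iff, ← volume_ball_le_volume_ball_iff (0 : V) 0 (norm_nonneg x) hR0.le]
  exact ((measure_mono hball).trans_eq (hg.volume_lt_eq le_rfl)).trans (measure_mono hsupp)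

lemma IsRadialRearr.isDensity (hg : IsRadialRearr ρ g) (hρ : IsDensity ρ) : IsDensity g :=
  hρ.of_volume_lt_eq hg.aemeasurable hg.nonneg (hg.isBounded_support hρ.isBounded_support)
    fun _ ha => hg.volume_lt_eq ha

lemma IsRadialRearr.interaction_posLog_le (hg : IsRadialRearr ρ g) (hρ : IsDensity ρ) {D : ℝ}
    (hD : 0 < D) (hgD : ∀ x ∈ Function.support g, ∀ y ∈ Function.support g, dist x y ≤ D) :
    interaction (fun r => log⁺ (r / D)) ρ ≤ interaction Real.log ρ - interaction Real.log g := by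
  have hgden := hg.isDensity hρ
  have hnear := hg.riesz_interaction_le_of_antitoneOn (antitoneOn_posLog_div_inv hD)
    (fun _ _ => Real.posLog_nonneg) hρ.integrable hρ.nonneg (hρ.integrable_posLog_div_inv D)
    (hgden.integrable_posLog_div_inv D)
  have hfar : interaction (fun r => log⁺ (r / D)) g = 0 :=
    interaction_eq_zero_of_dist_le (fun r hr hrD => (Real.posLog_eq_zero_iff _).2 <| by
      rwa [abs_of_nonneg (by positivity), div_le_one hD]) hgD
  rw [hρ.interaction_log_eq hD, hgden.interaction_log_eq hD,
    hg.integral_eq hρ.integrable.aemeasurable hρ.nonneg]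
  linarith

end LogKernel

section Concentration

lemma exists_le_integral_mul {α : Type*} [MeasurableSpace α] {μ : Measure α} {w F : α → ℝ}
    (hw : 0 ≤ᵐ[μ] w) (hw1 : ∫ x, w x ∂μ = 1) (hwF : Integrable (fun x => w x * F x) μ) :
    ∃ x, F x ≤ ∫ y, w y * F y ∂μ := by
  have hwi : Integrable w μ := .of_integral_ne_zero (hw1 ▸ one_ne_zero)
  by_contra! hlt
  set I := ∫ y, w y * F y ∂μ
  have hnonneg : 0 ≤ᵐ[μ] fun x => w x * F x - w x * I := by
    filter_upwards [hw] with x hx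
    simpa [mul_sub] using mul_nonneg hx (sub_pos.2 (hlt x)).le
  have hzero : ∫ x, (w x * F x - w x * I) ∂μ = 0 := by
    rw [integral_sub hwF (hwi.mul_const I), integral_mul_const, hw1, one_mul, sub_self]
  have hw0 : w =ᵐ[μ] 0 := by
    filter_upwards [(integral_eq_zero_iff_of_nonneg_ae hnonneg (hwF.sub (hwi.mul_const I))).1 hzero]
      with x hx
    rw [← mul_sub] at hx
    exact (mul_eq_zero.1 hx).resolve_right (sub_pos.2 (hlt x)).ne'
  exact one_ne_zero (hw1.symm.trans (integral_eq_zero_of_ae hw0))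

variable {V : Type*} [NormedAddCommGroup V] [InnerProductSpace ℝ V] [FiniteDimensional ℝ V]
  [MeasurableSpace V] [BorelSpace V] {ρ : V → ℝ}

lemma exists_integral_compl_ball_le_interaction (hρ : ∀ x, 0 ≤ ρ x) (hρ1 : ∫ x, ρ x = 1) (R : ℝ) :
    ∃ x₀, ∫ x in (ball x₀ R)ᶜ, ρ x ≤ interaction ((Set.Ici R).indicator 1) ρ := by
  have hρi : Integrable ρ := .of_integral_ne_zero (hρ1 ▸ one_ne_zero)
  have h_int := integrable_interaction (φ := (Set.Ici R).indicator 1) (N := 1)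
    (measurable_one.indicator measurableSet_Ici)
    (fun r => by by_cases h : r ∈ Set.Ici R <;> simp [h]) hρi hρi
  rw [Measure.volume_eq_prod] at h_int
  have hinner (x : V) : ∫ y, (Set.Ici R).indicator 1 (dist x y) * (ρ x * ρ y) =
      ρ x * ∫ y in (ball x R)ᶜ, ρ y := by
    rw [← integral_indicator measurableSet_ball.compl, ← integral_const_mul]
    refine integral_congr_ae (ae_of_all _ fun y => ?_)
    by_cases h : R ≤ dist x y <;> simp [Set.indicator, dist_comm y x, h]
  have hmean : ∫ x, ρ x * ∫ y in (ball x R)ᶜ, ρ y = interaction ((Set.Ici R).indicator 1) ρ := by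
    rw [interaction, Measure.volume_eq_prod, integral_prod _ h_int]
    simp only [hinner]
  exact hmean ▸ exists_le_integral_mul (ae_of_all _ hρ) hρ1
    (by simpa only [hinner] using h_int.integral_prod_left)

lemma indicator_Ici_le_posLog_div {D : ℝ} (hD : 0 < D) (r : ℝ) :
    (Set.Ici (3 * D)).indicator 1 r ≤ log⁺ (r / D) := by
  refine Set.indicator_apply_le' (fun hr => ?_) fun _ => Real.posLog_nonneg
  have hr3 : 3 ≤ r / D := (le_div_iff₀ hD).2 hr
  have hexp : Real.exp 1 ≤ r / D := Real.exp_one_lt_three.le.trans hr3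
  rw [Pi.one_apply, Real.posLog_eq_log (by rw [abs_of_nonneg] <;> linarith)]
  exact (Real.le_log_iff_exp_le (by linarith)).2 hexp

lemma IsDensity.exists_integral_compl_ball_le [Nontrivial V] (hρ : IsDensity ρ)
    (hρ1 : ∫ x, ρ x = 1) {D : ℝ} (hD : 0 < D) :
    ∃ x₀, ∫ x in (ball x₀ (3 * D))ᶜ, ρ x ≤ interaction (fun r => log⁺ (r / D)) ρ := by
  obtain ⟨x₀, hx₀⟩ := exists_integral_compl_ball_le_interaction hρ.nonneg hρ1 (3 * D)
  refine ⟨x₀, hx₀.trans (integral_mono_of_nonneg (ae_of_all _ fun q => ?_)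
    (hρ.integrable_posLog_div D) (ae_of_all _ fun q => ?_))⟩
  · exact mul_nonneg (Set.indicator_nonneg (fun _ _ => zero_le_one) _)
      (mul_nonneg (hρ.nonneg _) (hρ.nonneg _))
  · exact mul_le_mul_of_nonneg_right (indicator_Ici_le_posLog_div hD _)
      (mul_nonneg (hρ.nonneg _) (hρ.nonneg _))

end Concentration

section AnnularRearrangement

/-- The decreasing rearrangement of `u ⊔ 0` as a function of the measure `s`; superlevel sets at
negative heights are ignored. -/
def decRearr {α : Type*} [MeasurableSpace α] (μ : Measure α) (u : α → ℝ) (s : ℝ≥0∞) : ℝ :=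
  sSup {a : ℝ | 0 ≤ a ∧ s < μ {x | a < u x}}

section DecRearr

variable {α : Type*} [MeasurableSpace α] {μ : Measure α} {u : α → ℝ} {M : ℝ}

lemma decRearr_nonneg (μ : Measure α) (u : α → ℝ) (s : ℝ≥0∞) : 0 ≤ decRearr μ u s :=
  Real.sSup_nonneg fun _ ha => ha.1

lemma lt_decRearr_iff (hu : ∀ᵐ x ∂μ, u x ≤ M) {a : ℝ} (ha : 0 ≤ a) {s : ℝ≥0∞} :
    a < decRearr μ u s ↔ s < μ {x | a < u x} := by
  constructor
  · intro h
    have hne : {b : ℝ | 0 ≤ b ∧ s < μ {x | b < u x}}.Nonempty := by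
      by_contra hempty
      rw [decRearr, Set.not_nonempty_iff_eq_empty.1 hempty, Real.sSup_empty] at h
      exact ha.not_gt h
    obtain ⟨b, hb, hab⟩ := exists_lt_of_lt_csSup hne h
    exact hb.2.trans_le (measure_mono fun x hx => hab.trans hx)
  · intro h
    obtain ⟨b, hab, hb⟩ := exists_gt_of_lt_measure_lt h
    refine hab.trans_le (le_csSup ⟨M, fun c hc => ?_⟩ ⟨ha.trans hab.le, hb⟩)
    by_contra! hMc
    have hnull : μ {x | c < u x} = 0 := by
      simpa [ae_iff] using hu.mono fun x hx => hx.trans hMc.le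
    exact not_lt_zero (hnull ▸ hc.2)

end DecRearr

variable {V : Type*} [NormedAddCommGroup V] [InnerProductSpace ℝ V] [FiniteDimensional ℝ V]
  [MeasurableSpace V] [BorelSpace V]

/-- The function supported outside `ball x₀ R`, radial and decreasing in the distance to `x₀`
there, whose superlevel sets have the same volumes as those of `u`. -/
def annularRearr (u : V → ℝ) (x₀ : V) (R : ℝ) (x : V) : ℝ :=
  if dist x x₀ < R then 0 else decRearr volume u (volume (ball x₀ (dist x x₀) \ ball x₀ R))

variable {u : V → ℝ} {x₀ : V} {R M : ℝ}

lemma annularRearr_nonneg (u : V → ℝ) (x₀ : V) (R : ℝ) (x : V) : 0 ≤ annularRearr u x₀ R x := by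
  rw [annularRearr]
  split_ifs
  exacts [le_rfl, decRearr_nonneg _ _ _]

lemma annularRearr_of_mem_ball {x : V} (hx : x ∈ ball x₀ R) : annularRearr u x₀ R x = 0 :=
  if_pos hx

variable [Nontrivial V]

lemma exists_setOf_lt_annularRearr_eq (hu : ∀ᵐ x, u x ≤ M) (hfin : volume {x | 0 < u x} ≠ ∞)
    (hR : 0 ≤ R) (x₀ : V) {a : ℝ} (ha : 0 ≤ a) :
    ∃ r, R ≤ r ∧ {x | a < annularRearr u x₀ R x} = ball x₀ r \ ball x₀ R ∧
      volume (ball x₀ r \ ball x₀ R) = volume {x | a < u x} := by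
  have hfina : volume {x | a < u x} ≠ ∞ :=
    ((measure_mono fun _ hx => ha.trans_lt hx).trans_lt hfin.lt_top).ne
  obtain ⟨r, hRr, hr⟩ := exists_volume_ball_sdiff_ball_eq x₀ hR hfina
  refine ⟨r, hRr, ?_, hr⟩
  ext x
  simp only [Set.mem_ofPred_eq, Set.mem_sdiff, mem_ball, annularRearr, not_lt]
  split_ifs with hx
  · exact iff_of_false ha.not_gt fun h => h.2.not_gt hx
  · rw [lt_decRearr_iff hu ha, ← hr,
      volume_ball_sdiff_ball_lt_iff x₀ hR (not_lt.1 hx) hRr, and_iff_left (not_lt.1 hx)]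

lemma volume_lt_annularRearr (hu : ∀ᵐ x, u x ≤ M) (hfin : volume {x | 0 < u x} ≠ ∞) (hR : 0 ≤ R)
    {a : ℝ} (ha : 0 ≤ a) : volume {x | a < annularRearr u x₀ R x} = volume {x | a < u x} := by
  obtain ⟨r, -, hset, hr⟩ := exists_setOf_lt_annularRearr_eq hu hfin hR x₀ ha
  rw [hset, hr]

lemma measurable_annularRearr (hu : ∀ᵐ x, u x ≤ M) (hfin : volume {x | 0 < u x} ≠ ∞)
    (hR : 0 ≤ R) : Measurable (annularRearr u x₀ R) := by
  refine measurable_of_Ioi fun a => ?_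
  change MeasurableSet {x | a < annularRearr u x₀ R x}
  rcases le_or_gt 0 a with ha | ha
  · obtain ⟨r, -, hset, -⟩ := exists_setOf_lt_annularRearr_eq hu hfin hR x₀ ha
    exact hset ▸ measurableSet_ball.diff measurableSet_ball
  · convert MeasurableSet.univ
    exact Set.eq_univ_of_forall fun x => ha.trans_le (annularRearr_nonneg u x₀ R x)

lemma support_annularRearr_subset (hu : ∀ᵐ x, u x ≤ M) (hR : 0 ≤ R) {D : ℝ} (hD : 0 ≤ D)
    (hvol : volume {x | 0 < u x} ≤ volume (ball x₀ D)) :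
    Function.support (annularRearr u x₀ R) ⊆ ball x₀ (R + D) := by
  intro x hx
  obtain ⟨r, hRr, hset, hr⟩ := exists_setOf_lt_annularRearr_eq hu
    (hvol.trans_lt measure_ball_lt_top).ne hR x₀ le_rfl
  have hxr : x ∈ ball x₀ r \ ball x₀ R := hset ▸ (annularRearr_nonneg u x₀ R x).lt_of_ne' hx
  refine ball_subset_ball ?_ hxr.1
  rw [← volume_ball_le_volume_ball_iff x₀ x₀ (hR.trans hRr) (by positivity)]
  calc volume (ball x₀ r) = volume (ball x₀ R) + volume (ball x₀ r \ ball x₀ R) := by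
        rw [volume_ball_sdiff_ball x₀ hRr,
          add_tsub_cancel_of_le (measure_mono (ball_subset_ball hRr))]
    _ ≤ volume (ball x₀ R) + volume (ball x₀ D) :=
        add_le_add le_rfl (hr.trans_le hvol)
    _ ≤ volume (ball x₀ (R + D)) := volume_ball_add_volume_ball_le _ _ _ hR hD

end AnnularRearrangement

section Compactification

variable {V : Type*} [NormedAddCommGroup V] [InnerProductSpace ℝ V] [FiniteDimensional ℝ V]
  [MeasurableSpace V] [BorelSpace V]

namespace IsDensity

variable [Nontrivial V] {f g : V → ℝ}

lemma interaction_log_sub_le_of_le (hf : IsDensity f) (hg : IsDensity g) (hfg : ∀ x, f x ≤ g x)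
    {L : ℝ} (hL : ∀ x ∈ Function.support g, ∀ y ∈ Function.support g, Real.log (dist x y) ≤ L) :
    interaction Real.log g - interaction Real.log f ≤
      L * ((∫ x, g x) ^ 2 - (∫ x, f x) ^ 2) := by
  have hsq (h : V → ℝ) : (∫ x, h x) ^ 2 = ∫ q : V × V, h q.1 * h q.2 := by
    rw [Measure.volume_eq_prod, integral_prod_mul, sq]
  rw [hsq, hsq, interaction, interaction, ← integral_sub hg.integrable_log hf.integrable_log,
    ← integral_sub hg.integrable_mul_prod hf.integrable_mul_prod, ← integral_const_mul]
  refine integral_mono (hg.integrable_log.sub hf.integrable_log)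
    ((hg.integrable_mul_prod.sub hf.integrable_mul_prod).const_mul L) fun q => ?_
  have hff : 0 ≤ f q.1 * f q.2 := mul_nonneg (hf.nonneg _) (hf.nonneg _)
  have hle : f q.1 * f q.2 ≤ g q.1 * g q.2 :=
    mul_le_mul (hfg _) (hfg _) (hf.nonneg _) (hg.nonneg _)
  simp only [← mul_sub]
  rcases eq_or_ne (g q.1 * g q.2) 0 with h0 | h0
  · simp [h0, le_antisymm (h0 ▸ hle) hff]
  · exact mul_le_mul_of_nonneg_right (hL _ (left_ne_zero_of_mul h0) _ (right_ne_zero_of_mul h0))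
      (sub_nonneg.2 hle)

lemma interaction_log_sub_le_of_ge (hf : IsDensity f) (hg : IsDensity g)
    (hfg : ∀ x, f x ≤ g x) : interaction Real.log f - interaction Real.log g ≤
      2 * singularMass V * ((∫ x, g x) - ∫ x, f x) := by
  have hgf : Integrable fun x => g x - f x := hg.integrable.sub hf.integrable
  have hfst := integrable_posLog_inv_dist_mul_fst hgf
  have hsnd := integrable_posLog_inv_dist_mul_snd hgf
  calc interaction Real.log f - interaction Real.log g
      = ∫ q : V × V, -Real.log (dist q.1 q.2) * (g q.1 * g q.2 - f q.1 * f q.2) := by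
        rw [interaction, interaction, ← integral_sub hf.integrable_log hg.integrable_log]
        congr with q
        ring
    _ ≤ ∫ q : V × V, (log⁺ (dist q.1 q.2)⁻¹ * (g q.1 - f q.1) +
          log⁺ (dist q.1 q.2)⁻¹ * (g q.2 - f q.2)) := by
        refine integral_mono_ae ?_ (hfst.add hsnd) ?_
        · refine (hf.integrable_log.sub hg.integrable_log).congr (ae_of_all _ fun q => ?_)
          simp only [Pi.sub_apply]
          ring
        filter_upwards [hg.ae_fst_le_one, hg.ae_snd_le_one] with q h1 h2
        have hle : f q.1 * f q.2 ≤ g q.1 * g q.2 :=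
          mul_le_mul (hfg _) (hfg _) (hf.nonneg _) (hg.nonneg _)
        have hdiff : g q.1 * g q.2 - f q.1 * f q.2 ≤ g q.1 - f q.1 + (g q.2 - f q.2) := by
          nlinarith [hfg q.1, hfg q.2, hf.nonneg q.1, hf.nonneg q.2]
        rw [← mul_add, ← Real.log_inv]
        exact mul_le_mul (le_max_right _ _) hdiff (sub_nonneg.2 hle) Real.posLog_nonneg
    _ = 2 * singularMass V * ((∫ x, g x) - ∫ x, f x) := by
        rw [integral_add hfst hsnd, integral_posLog_inv_dist_mul_fst hgf,
          integral_posLog_inv_dist_mul_snd hgf, integral_sub hg.integrable hf.integrable]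
        ring

end IsDensity

/-- The function obtained from `ρ` by moving its part outside `ball x₀ R` into an annulus around
that ball. -/
def compactify (ρ : V → ℝ) (x₀ : V) (R : ℝ) (x : V) : ℝ :=
  (ball x₀ R).indicator ρ x + annularRearr ((ball x₀ R)ᶜ.indicator ρ) x₀ R x

variable {ρ : V → ℝ} {x₀ : V} {R D : ℝ}

lemma indicator_ball_le_compactify (x : V) : (ball x₀ R).indicator ρ x ≤ compactify ρ x₀ R x :=
  le_add_of_nonneg_right (annularRearr_nonneg _ _ _ _)

lemma compactify_nonneg (hρ : ∀ x, 0 ≤ ρ x) (x : V) : 0 ≤ compactify ρ x₀ R x :=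
  (Set.indicator_nonneg (fun y _ => hρ y) x).trans (indicator_ball_le_compactify x)

lemma compactify_of_mem_ball {x : V} (hx : x ∈ ball x₀ R) : compactify ρ x₀ R x = ρ x := by
  rw [compactify, annularRearr_of_mem_ball hx, Set.indicator_of_mem hx, add_zero]

lemma compactify_of_notMem_ball {x : V} (hx : x ∉ ball x₀ R) :
    compactify ρ x₀ R x = annularRearr ((ball x₀ R)ᶜ.indicator ρ) x₀ R x := by
  rw [compactify, Set.indicator_of_notMem hx, zero_add]

lemma setOf_lt_indicator {α : Type*} (s : Set α) (f : α → ℝ) {a : ℝ} (ha : 0 ≤ a) :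
    {x | a < s.indicator f x} = {x | a < f x} ∩ s := by
  ext x
  by_cases hx : x ∈ s <;> simp [hx, ha]

lemma setOf_lt_compactify_inter (ρ : V → ℝ) (x₀ : V) (R a : ℝ) :
    {x | a < compactify ρ x₀ R x} ∩ ball x₀ R = {x | a < ρ x} ∩ ball x₀ R := by
  ext x
  exact and_congr_left fun hx => by rw [Set.mem_ofPred_eq, compactify_of_mem_ball hx]; rfl

lemma setOf_lt_compactify_sdiff (ρ : V → ℝ) (x₀ : V) (R : ℝ) {a : ℝ} (ha : 0 ≤ a) :
    {x | a < compactify ρ x₀ R x} \ ball x₀ R =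
      {x | a < annularRearr ((ball x₀ R)ᶜ.indicator ρ) x₀ R x} := by
  ext x
  by_cases hx : x ∈ ball x₀ R
  · simp [hx, annularRearr_of_mem_ball hx, ha]
  · simp [hx, compactify_of_notMem_ball hx]

variable [Nontrivial V]

lemma IsDensity.volume_lt_compactify (hρ : IsDensity ρ) (hR : 0 ≤ R) {a : ℝ} (ha : 0 ≤ a) :
    volume {x | a < compactify ρ x₀ R x} = volume {x | a < ρ x} := by
  have hu := hρ.indicator (measurableSet_ball (x := x₀) (ε := R)).compl
  rw [← measure_inter_add_sdiff {x | a < compactify ρ x₀ R x} measurableSet_ball,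
    ← measure_inter_add_sdiff {x | a < ρ x} (measurableSet_ball (x := x₀) (ε := R)),
    setOf_lt_compactify_inter, setOf_lt_compactify_sdiff ρ x₀ R ha,
    volume_lt_annularRearr hu.le_one hu.volume_pos_ne_top hR ha, setOf_lt_indicator _ _ ha,
    Set.sdiff_eq]

lemma IsDensity.support_compactify_subset (hρ : IsDensity ρ) (hR : 0 ≤ R) (hD : 0 ≤ D)
    (hvol : volume {x | 0 < ρ x} ≤ volume (ball x₀ D)) :
    Function.support (compactify ρ x₀ R) ⊆ ball x₀ (R + D) := by
  intro x hx
  by_cases hxb : x ∈ ball x₀ R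
  · exact ball_subset_ball (le_add_of_nonneg_right hD) hxb
  · have hu := hρ.indicator (measurableSet_ball (x := x₀) (ε := R)).compl
    refine support_annularRearr_subset hu.le_one hR hD ?_
      ((compactify_of_notMem_ball hxb).symm.trans_ne hx)
    rw [setOf_lt_indicator _ _ le_rfl]
    exact (measure_mono Set.inter_subset_left).trans hvol

lemma IsDensity.aemeasurable_compactify (hρ : IsDensity ρ) (hR : 0 ≤ R) :
    AEMeasurable (compactify ρ x₀ R) := by
  have hu := hρ.indicator (measurableSet_ball (x := x₀) (ε := R)).compl
  exact (hρ.integrable.aemeasurable.indicator measurableSet_ball).add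
    (measurable_annularRearr hu.le_one hu.volume_pos_ne_top hR).aemeasurable

lemma isDensity_compactify (hρ : IsDensity ρ) (hR : 0 ≤ R) (hD : 0 ≤ D)
    (hvol : volume {x | 0 < ρ x} ≤ volume (ball x₀ D)) : IsDensity (compactify ρ x₀ R) :=
  hρ.of_volume_lt_eq (hρ.aemeasurable_compactify hR) (compactify_nonneg hρ.nonneg)
    (isBounded_ball.subset (hρ.support_compactify_subset hR hD hvol))
    fun _ ha => hρ.volume_lt_compactify hR ha

lemma IsDensity.integral_compactify (hρ : IsDensity ρ) (hR : 0 ≤ R) :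
    ∫ x, compactify ρ x₀ R x = ∫ x, ρ x :=
  integral_eq_of_measure_lt_eq hρ.integrable.aemeasurable (hρ.aemeasurable_compactify hR)
    hρ.nonneg (compactify_nonneg hρ.nonneg) fun _ ha => hρ.volume_lt_compactify hR ha.le

lemma IsDensity.interaction_log_compactify_sub_le (hρ : IsDensity ρ) (hρ1 : ∫ x, ρ x = 1)
    (hR : 0 ≤ R) (hD : 0 ≤ D) (hvol : volume {x | 0 < ρ x} ≤ volume (ball x₀ D)) :
    interaction Real.log (compactify ρ x₀ R) - interaction Real.log ρ ≤
      (2 * log⁺ (2 * (R + D)) + 2 * singularMass V) * ∫ x in (ball x₀ R)ᶜ, ρ x := by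
  have hsupp := hρ.support_compactify_subset hR hD hvol
  have hlog : ∀ x ∈ Function.support (compactify ρ x₀ R),
      ∀ y ∈ Function.support (compactify ρ x₀ R),
        Real.log (dist x y) ≤ log⁺ (2 * (R + D)) := fun x hx y hy => by
    refine (le_max_right 0 _).trans (Real.posLog_le_posLog dist_nonneg ?_)
    linarith [dist_triangle_right x y x₀, mem_ball.1 (hsupp hx), mem_ball.1 (hsupp hy)]
  have hball := hρ.indicator (measurableSet_ball (x := x₀) (ε := R))
  have hfar := hball.interaction_log_sub_le_of_le (isDensity_compactify hρ hR hD hvol)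
    indicator_ball_le_compactify hlog
  have hnear := hball.interaction_log_sub_le_of_ge hρ
    (Set.indicator_le_self' fun x _ => hρ.nonneg x)
  have hsplit := integral_add_compl (measurableSet_ball (x := x₀) (ε := R)) hρ.integrable
  rw [hρ1] at hsplit hnear
  rw [hρ.integral_compactify hR, hρ1, integral_indicator measurableSet_ball,
    eq_sub_of_add_eq hsplit] at hfar
  rw [integral_indicator measurableSet_ball, eq_sub_of_add_eq hsplit] at hnear
  have hL : 0 ≤ log⁺ (2 * (R + D)) := Real.posLog_nonneg
  nlinarith [mul_nonneg hL (sq_nonneg (∫ x in (ball x₀ R)ᶜ, ρ x))]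

end Compactification

section LogarithmicEnergy

variable {ρ ρs g : E2 → ℝ}

lemma sub_mul_energy_le_of_interaction_le {C : ℝ} (h : interaction Real.log g ≤
    interaction Real.log ρ + C * (interaction Real.log ρ - interaction Real.log ρs)) :
    energy ρ - C * (energy ρs - energy ρ) ≤ energy g := by
  have hE (f : E2 → ℝ) : energy f = -(2 * π)⁻¹ * interaction Real.log f := rfl
  rw [hE, hE, hE]
  linear_combination (2 * π)⁻¹ * h

lemma IsSymmDecRearr.isRadialRearr (h : IsSymmDecRearr ρ ρs) (hρ : ∀ x, 0 ≤ ρ x) :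
    IsRadialRearr ρ ρs where
  nonneg := h.1
  exists_ball a ha := (h.2 a ha).1
  volume_le_eq a ha := by simpa only [abs_of_nonneg (hρ _)] using (h.2 a ha).2

end LogarithmicEnergy

section AlmostMaximizer

variable {V : Type*} [NormedAddCommGroup V] [InnerProductSpace ℝ V] [FiniteDimensional ℝ V]
  [MeasurableSpace V] [BorelSpace V] {ρ ρs : V → ℝ}

lemma IsDensity.of_hasCompactSupport (hρ : HasCompactSupport ρ) (hρ0 : ∀ x, 0 ≤ ρ x)
    (hρi : Integrable ρ) (hρn : eLpNorm ρ ⊤ volume ≤ 1) : IsDensity ρ where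
  nonneg := hρ0
  integrable := hρi
  le_one := by
    filter_upwards [ae_le_eLpNormEssSup (f := ρ) (μ := volume)] with x hx
    rw [← eLpNorm_exponent_top, ← ofReal_norm, Real.norm_of_nonneg (hρ0 x)] at hx
    exact ENNReal.ofReal_le_one.1 (hx.trans hρn)
  isBounded_support := hρ.isCompact.isBounded.subset (subset_tsupport ρ)

variable [Nontrivial V]

lemma IsRadialRearr.diam_support_pos (hs : IsRadialRearr ρ ρs) (hρ : IsDensity ρ)
    (hρ1 : ∫ x, ρ x ≠ 0) : 0 < diam (Function.support ρs) :=
  (hs.isDensity hρ).diam_support_pos <| by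
    rwa [hs.integral_eq hρ.integrable.aemeasurable hρ.nonneg]

lemma IsRadialRearr.volume_pos_le_volume_ball_diam (hs : IsRadialRearr ρ ρs) (hρ : IsDensity ρ)
    (x : V) : volume {y | 0 < ρ y} ≤ volume (ball x (diam (Function.support ρs))) :=
  (hs.volume_lt_eq le_rfl).symm.trans_le ((hs.isDensity hρ).volume_pos_le_volume_ball_diam x)

lemma IsRadialRearr.exists_integral_compl_ball_le (hs : IsRadialRearr ρ ρs) (hρ : IsDensity ρ)
    (hρ1 : ∫ x, ρ x = 1) :
    ∃ x₀, ∫ x in (ball x₀ (3 * diam (Function.support ρs)))ᶜ, ρ x ≤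
      interaction Real.log ρ - interaction Real.log ρs := by
  have hD := hs.diam_support_pos hρ (hρ1 ▸ one_ne_zero)
  obtain ⟨x₀, hx₀⟩ := hρ.exists_integral_compl_ball_le hρ1 hD
  exact ⟨x₀, hx₀.trans <| hs.interaction_posLog_le hρ hD fun x hx y hy =>
    dist_le_diam_of_mem (hs.isDensity hρ).isBounded_support hx hy⟩

theorem compactification_of_almost_maximizer_general (Λ : ℝ) :
    ∃ C > (0 : ℝ), ∀ ρ ρs : V → ℝ, IsDensity ρ → ∫ x, ρ x = 1 → IsRadialRearr ρ ρs →
      diam (Function.support ρs) ≤ Λ →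
      ∃ (x₀ : V) (ρt : V → ℝ),
        (∀ x, 0 ≤ ρt x) ∧
        (∀ a : ℝ, 0 < a → volume {x | a < ρt x} = volume {x | a < ρ x}) ∧
        (∀ x ∈ ball x₀ (3 * diam (Function.support ρs)), ρt x = ρ x) ∧
        Function.support ρt ⊆ closedBall x₀ (4 * diam (Function.support ρs)) ∧
        interaction Real.log ρt ≤ interaction Real.log ρ +
          C * (interaction Real.log ρ - interaction Real.log ρs) := by
  have hK : 0 ≤ 2 * log⁺ (8 * Λ) + 2 * singularMass V := by
    linarith [Real.posLog_nonneg (x := 8 * Λ), singularMass_nonneg (V := V)]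
  refine ⟨2 * log⁺ (8 * Λ) + 2 * singularMass V + 1, by linarith, ?_⟩
  intro ρ ρs hρ hρ1 hs hΛ
  have hvol := hs.volume_pos_le_volume_ball_diam hρ
  obtain ⟨x₀, hdeficit⟩ := hs.exists_integral_compl_ball_le hρ hρ1
  set D := diam (Function.support ρs)
  have hD : 0 ≤ D := diam_nonneg
  have h3D : 0 ≤ 3 * D := by positivity
  have hcost := hρ.interaction_log_compactify_sub_le hρ1 h3D hD (hvol x₀)
  have hmass : 0 ≤ ∫ x in (ball x₀ (3 * D))ᶜ, ρ x := integral_nonneg hρ.nonneg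
  have hL : log⁺ (2 * (3 * D + D)) ≤ log⁺ (8 * Λ) :=
    Real.posLog_le_posLog (by positivity) (by linarith)
  refine ⟨x₀, compactify ρ x₀ (3 * D), compactify_nonneg hρ.nonneg,
    fun a ha => hρ.volume_lt_compactify h3D ha.le, fun x hx => compactify_of_mem_ball hx,
    (hρ.support_compactify_subset h3D hD (hvol x₀)).trans ?_, ?_⟩
  · exact ball_subset_closedBall.trans (closedBall_subset_closedBall (by linarith))
  · nlinarith [mul_le_mul_of_nonneg_right hL hmass, mul_le_mul_of_nonneg_left hdeficit hK]

end AlmostMaximizer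

/-- Compactification step (Step 2 of the proof of Theorem 1.4): a normalized density
with small energy defect admits an equimeasurable modification supported in a ball of
radius `4D`, agreeing with `ρ` on a ball of radius `3D`, with comparable energy. -/
theorem compactification_of_almost_maximizer :
    ∀ Λ : ℝ, 2 / Real.sqrt Real.pi ≤ Λ →
    ∃ c > (0:ℝ), ∃ C > (0:ℝ),
      ∀ ρ ρs : E2 → ℝ,
        (∀ x, 0 ≤ ρ x) →
        HasCompactSupport ρ →
        Integrable ρ →
        (∫ x, ρ x) = 1 →
        eLpNorm ρ ⊤ volume = 1 →
        IsSymmDecRearr ρ ρs →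
        Metric.diam (Function.support ρs) ≤ Λ →
        energy ρs - energy ρ ≤ c →
        ∃ (x₀ : E2) (ρt : E2 → ℝ),
          (∀ x, 0 ≤ ρt x) ∧
          -- ρ̃ is equimeasurable with ρ
          (∀ a : ℝ, 0 < a → volume {x | a < ρt x} = volume {x | a < ρ x}) ∧
          -- ρ̃ = ρ on B_{3D}(x₀)
          (∀ x ∈ Metric.ball x₀ (3 * Metric.diam (Function.support ρs)), ρt x = ρ x) ∧
          -- supp ρ̃ ⊆ B_{4D}(x₀)
          Function.support ρt ⊆
            Metric.closedBall x₀ (4 * Metric.diam (Function.support ρs)) ∧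
          -- almost no energy is lost
          energy ρ - C * (energy ρs - energy ρ) ≤ energy ρt := by
  intro Λ _
  obtain ⟨C, hC, hΛC⟩ := compactification_of_almost_maximizer_general (V := E2) Λ
  refine ⟨1, one_pos, C, hC, fun ρ ρs hρ0 hρc hρi hρ1 hρn hs hΛ _ => ?_⟩
  obtain ⟨x₀, ρt, hnonneg, hvol, heq, hsupp, hlog⟩ :=
    hΛC ρ ρs (IsDensity.of_hasCompactSupport hρc hρ0 hρi hρn.le) hρ1 (hs.isRadialRearr hρ0) hΛ
  exact ⟨x₀, ρt, hnonneg, hvol, heq, hsupp, sub_mul_energy_le_of_interaction_le hlog⟩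

end
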